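/- Let n ≥ 2 be a natural number. The number of (2n−2)-tuples (τ_1, …, τ_{2n−2}) of transpositions in the symmetric group on {1,…,n} such that τ_1⋯τ_{2n−2} = id and the subgroup generated by τ_1, …, τ_{2n−2} acts transitively on {1,…,n} equals n^{n−3}·(2n−2)!; equivalently, the genus-zero Hurwitz number with no degenerate branch points and 2n−2 simple branch points equals n^{n−3}·(2n−2)!/n!. -/

import Mathlib

open Equiv

/-!
Record a word of transpositions by its state: its product together with the orbit relation of the
group generated by its letters. The states form a monoid, and a coefficient of a power of the sum of
all transpositions in its monoid algebra counts the words with a given state. For a cycle of length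
`h + 1` in a set `A` with `N` further points, let `T N h` be the number of words of length
`2 * N + h` in the transpositions of `A` whose product is this cycle and which connect `A`.

Fix a point `a` of the cycle. The sum of the star transpositions at `a` commutes with the sum of
the transpositions of `A` fixing `a`, so by the binomial theorem it suffices to count the words in
which `r` star transpositions precede `q` others. Moving the first star transposition to the other
side either joins a fixed point to the cycle or cuts the cycle in two. In the second case the rest
of the word either still connects `A`, which is impossible because it is too short for the
Riemann–Hurwitz inequality, or leaves two blocks, the one without `a` being counted by a smaller
`T`. This gives a recursion in `r`.

The recursion is solved by generating functions. The substitution `x = z exp (-z)`,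
`y = v exp (-v) exp (-z)` turns the conjectured series of `T` into a series that is linear in `z`,
and the recursion step into multiplication by `u + v + u v`. The boundary term of the recursion is
removed by a reflection principle: the iterates are the coefficients above the diagonal of an
antisymmetric series in `u` and `v`. Summing over `r` with weights `1 / r!` produces
`exp (u + v + u v)`, which cancels the exponentials of the initial series.
-/

namespace Hurwitz

section GeneratingSeries

open PowerSeries Finset
open scoped Nat

lemma sum_neg_one_pow_mul_choose_mul_add_pow {n j : ℕ} (hj : j < n) (y : ℚ) :
    ∑ k ∈ range (n + 1), (-1 : ℚ) ^ (n - k) * n.choose k * (y + k) ^ j = 0 := by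
  have h := congrFun (fwdDiff_iter_pow_eq_zero_of_lt (R := ℚ) hj) y
  rw [fwdDiff_iter_eq_sum_shift] at h
  simpa using h

lemma sum_neg_pow_div_factorial_mul_pow {n j : ℕ} (hj : j < n) (y : ℚ) :
    ∑ k ∈ range (n + 1), (y + k) ^ j * (-1) ^ (n - k) / (k ! * (n - k)! : ℚ) = 0 := by
  have hterm : ∀ k ∈ range (n + 1), (y + k) ^ j * (-1) ^ (n - k) / (k ! * (n - k)! : ℚ) =
      (n ! : ℚ)⁻¹ * ((-1) ^ (n - k) * n.choose k * (y + k) ^ j) := fun k hk => by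
    rw [Nat.cast_choose ℚ (mem_range_succ_iff.mp hk)]
    have := n.factorial_ne_zero
    field_simp
  rw [sum_congr rfl hterm, ← mul_sum, sum_neg_one_pow_mul_choose_mul_add_pow hj, mul_zero]

section Substitution

variable {K : Type*} [CommRing K] [Algebra ℚ K]

/-- The series `c X exp (-X)`. -/
noncomputable def lambertSeries (c : K) : K⟦X⟧ := C c * X * rescale (-1) (exp K)

lemma hasSubst_lambertSeries (c : K) : HasSubst (lambertSeries c) :=
  .of_constantCoeff_zero' (by simp [lambertSeries])

lemma lambertSeries_pow_mul_exp (c b : K) (d : ℕ) :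
    lambertSeries c ^ d * rescale b (exp K) = C (c ^ d) * (X ^ d * rescale (b - d) (exp K)) := by
  rw [lambertSeries, mul_pow, mul_pow, ← map_pow, ← map_pow, exp_pow_eq_rescale_exp,
    rescale_rescale, mul_assoc, mul_assoc, exp_mul_exp_eq_exp_add]
  congr 4
  ring

lemma coeff_rescale_exp (b : K) (n : ℕ) :
    coeff n (rescale b (exp K)) = b ^ n * algebraMap ℚ K (1 / n !) := by
  rw [coeff_rescale, coeff_exp]

/-- The ring endomorphism `X ↦ c X exp (-X)` of `K⟦X⟧`. -/
noncomputable def substLambert (c : K) : K⟦X⟧ →+* K⟦X⟧ :=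
  (substAlgHom (R := K) (hasSubst_lambertSeries c)).toRingHom

lemma substLambert_C (c a : K) : substLambert c (C a) = C a :=
  (substAlgHom (hasSubst_lambertSeries c)).commutes a

lemma substLambert_X (c : K) : substLambert c X = lambertSeries c :=
  substAlgHom_X (hasSubst_lambertSeries c)

lemma coeff_substLambert_mul_exp (c b : K) (f : K⟦X⟧) (n : ℕ) :
    coeff n (substLambert c f * rescale b (exp K)) =
      ∑ d ∈ range (n + 1), coeff d f * c ^ d *
        ((b - d) ^ (n - d) * algebraMap ℚ K (1 / (n - d)!)) := by
  have htrunc : f = X ^ (n + 1) * PowerSeries.mk (fun i => coeff (i + (n + 1)) f) +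
      ∑ d ∈ range (n + 1), C (coeff d f) * X ^ d := by
    ext i
    rcases le_or_gt (n + 1) i with hi | hi
    · simp [coeff_X_pow_mul', coeff_X_pow, hi, show ¬ i ≤ n by omega]
    · simp [coeff_X_pow_mul', coeff_X_pow, hi, hi.not_ge]
  have hhigh (g : K⟦X⟧) :
      coeff n (substLambert c (X ^ (n + 1) * g) * rescale b (exp K)) = 0 := by
    rw [map_mul (substLambert c), map_pow, substLambert_X, mul_right_comm,
      lambertSeries_pow_mul_exp, mul_assoc, mul_assoc, coeff_C_mul, coeff_X_pow_mul',
      if_neg (by omega), mul_zero]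
  conv_lhs => rw [htrunc]
  rw [map_add, add_mul, map_add, hhigh, zero_add, map_sum, sum_mul, map_sum]
  refine sum_congr rfl fun d hd => ?_
  rw [map_mul (substLambert c), map_pow, substLambert_X, substLambert_C, mul_assoc,
    lambertSeries_pow_mul_exp, coeff_C_mul, coeff_C_mul, coeff_X_pow_mul',
    if_pos (mem_range_succ_iff.mp hd), coeff_rescale_exp, mul_assoc]

end Substitution

/-- The change of variables `x = z exp (-z)`, `y = v exp (-v) exp (-z)` on series in `x` with
outer variable `y`. -/
noncomputable def changeVar : ℚ⟦X⟧⟦X⟧ →+* ℚ⟦X⟧⟦X⟧ :=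
  (substLambert (rescale (-1) (exp ℚ))).comp (PowerSeries.map (substLambert 1))

lemma coeff_coeff_changeVar (f : ℚ⟦X⟧⟦X⟧) (n j : ℕ) :
    coeff n (coeff j (changeVar f)) = ∑ h ∈ range (j + 1), ∑ N ∈ range (n + 1),
      coeff N (coeff h f) * ((-h) ^ (j - h) / (j - h)!) *
        ((-(N + h)) ^ (n - N) / (n - N)!) := by
  have houter := coeff_substLambert_mul_exp (rescale (-1) (exp ℚ)) 0
    (PowerSeries.map (substLambert 1) f) j
  simp only [rescale_zero, RingHom.comp_apply, constantCoeff_exp, map_one, mul_one] at houter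
  rw [changeVar, RingHom.comp_apply, houter, map_sum]
  refine sum_congr rfl fun h _ => ?_
  have hscalar : ((0 : ℚ⟦X⟧) - h) ^ (j - h) * algebraMap ℚ ℚ⟦X⟧ (1 / (j - h)!) =
      C ((-h : ℚ) ^ (j - h) / (j - h)!) := by
    rw [div_eq_mul_one_div (_ ^ _), map_mul, map_pow, map_neg, map_natCast, zero_sub]
    rfl
  rw [hscalar, coeff_map, ← map_pow, exp_pow_eq_rescale_exp, rescale_rescale, coeff_mul_C,
    coeff_substLambert_mul_exp, sum_mul]
  refine sum_congr rfl fun N _ => ?_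
  simp only [one_pow, Algebra.algebraMap_self, RingHom.id_apply]
  ring

lemma coeff_eq_zero_of_coeff_changeVar_eq_zero {f : ℚ⟦X⟧⟦X⟧} {R : ℕ}
    (hf : ∀ n j, 2 * n + j < R → coeff n (coeff j (changeVar f)) = 0) (n j : ℕ)
    (hR : 2 * n + j < R) : coeff n (coeff j f) = 0 := by
  induction hs : n + j using Nat.strong_induction_on generalizing n j with
  | _ s ih =>
    have hsmall (h N : ℕ) (hh : h ≤ j) (hN : N ≤ n) (hne : N + h ≠ n + j) :
        coeff N (coeff h f) = 0 := ih (N + h) (by omega) N h (by omega) rfl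
    have hdiag := hf n j hR
    rw [coeff_coeff_changeVar, sum_eq_single_of_mem j (by simp), sum_eq_single_of_mem n (by simp)]
      at hdiag
    · simpa using hdiag
    · intro N hN hne
      have := mem_range_succ_iff.mp hN
      rw [hsmall j N le_rfl this (by omega), zero_mul, zero_mul]
    · intro h hh hne
      have := mem_range_succ_iff.mp hh
      refine sum_eq_zero fun N hN => ?_
      have := mem_range_succ_iff.mp hN
      rw [hsmall h N ‹_› this (by omega), zero_mul, zero_mul]

lemma changeVar_X : changeVar X = lambertSeries (rescale (-1) (exp ℚ)) := by
  rw [changeVar, RingHom.comp_apply, PowerSeries.map_X, substLambert_X]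

lemma changeVar_C (c : ℚ⟦X⟧) : changeVar (C c) = C (substLambert 1 c) := by
  rw [changeVar, RingHom.comp_apply, PowerSeries.map_C, substLambert_C]

lemma C_exp_mul_C_exp_neg : C (exp ℚ) * C (rescale (-1) (exp ℚ)) = (1 : ℚ⟦X⟧⟦X⟧) := by
  rw [← map_mul, ← evalNegHom, exp_mul_exp_neg_eq_one, map_one]

lemma exp_mul_exp_mul_changeVar_X : exp ℚ⟦X⟧ * C (exp ℚ) * changeVar X = X := by
  have hexp : exp ℚ⟦X⟧ * rescale (-1) (exp ℚ⟦X⟧) = 1 := exp_mul_exp_neg_eq_one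
  rw [changeVar_X, lambertSeries]
  linear_combination X * C_exp_mul_C_exp_neg +
    X * C (exp ℚ) * C (rescale (-1) (exp ℚ)) * hexp

lemma exp_mul_exp_mul_changeVar_C_X :
    exp ℚ⟦X⟧ * C (exp ℚ) * changeVar (C X) = C X * exp ℚ⟦X⟧ := by
  rw [changeVar_C, substLambert_X, lambertSeries, map_mul C, map_one, one_mul]
  linear_combination exp ℚ⟦X⟧ * C X * C_exp_mul_C_exp_neg

/-- The normalised Goulden–Jackson number of the cycle type `(k, 1, …, 1)` with `N` fixed points:
a permutation of this type has `(2 * N + k - 1)! * N ! * hookNumber N k` minimal transitive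
factorisations into transpositions. The value is `0` for `k = 0`. -/
noncomputable def hookNumber (N k : ℕ) : ℚ :=
  k ^ (k + 1) / k ! * ((N + k) ^ N / (N + k) ^ 2) / N !

/-- The generating series `∑ hookNumber N k * x ^ N * y ^ k`, with outer variable `y`. -/
noncomputable def hookSeries : ℚ⟦X⟧⟦X⟧ :=
  PowerSeries.mk fun k => PowerSeries.mk fun N => hookNumber N k

lemma hookNumber_zero_right (N : ℕ) : hookNumber N 0 = 0 := by
  simp [hookNumber]

lemma coeff_coeff_hookSeries (N k : ℕ) : coeff N (coeff k hookSeries) = hookNumber N k := by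
  rw [hookSeries, coeff_mk, coeff_mk]

lemma sum_hookNumber_mul (h n : ℕ) :
    ∑ N ∈ range (n + 1), hookNumber N h * ((-(N + h)) ^ (n - N) / (n - N)!) =
      h ^ (h + 1) / h ! * ∑ N ∈ range (n + 1),
        (h + N) ^ n / (h + N) ^ 2 * (-1) ^ (n - N) / (N ! * (n - N)! : ℚ) := by
  rw [mul_sum]
  refine sum_congr rfl fun N hN => ?_
  rw [neg_pow, hookNumber, ← Nat.add_sub_of_le (mem_range_succ_iff.mp hN), Nat.add_sub_cancel_left,
    pow_add _ N, add_comm (N : ℚ)]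
  ring

lemma coeff_coeff_changeVar_hookSeries (n j : ℕ) :
    coeff n (coeff j (changeVar hookSeries)) = ∑ h ∈ range (j + 1),
      (-h) ^ (j - h) / (j - h)! * ∑ N ∈ range (n + 1),
        hookNumber N h * ((-(N + h)) ^ (n - N) / (n - N)!) := by
  simp only [coeff_coeff_changeVar, coeff_coeff_hookSeries, mul_sum]
  exact sum_congr rfl fun h _ => sum_congr rfl fun N _ => by ring

lemma coeff_zero_coeff_changeVar_hookSeries (j : ℕ) :
    coeff 0 (coeff j (changeVar hookSeries)) = if j = 1 then 1 else 0 := by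
  rw [coeff_coeff_changeVar_hookSeries]
  match j with
  | 0 => simp [hookNumber]
  | 1 => simp [hookNumber, sum_range_succ]
  | j + 2 =>
    rw [if_neg (by omega), ← sum_neg_pow_div_factorial_mul_pow (show j + 1 < j + 2 by omega) 0]
    refine sum_congr rfl fun h hh => ?_
    rw [sum_hookNumber_mul]
    rcases eq_or_ne h 0 with rfl | h0
    · simp
    · have : (h : ℚ) ≠ 0 := mod_cast h0
      have hpow : (h : ℚ) ^ (j + 1) * h = h ^ h * h ^ (j + 2 - h) := by
        rw [← pow_succ, ← pow_add, Nat.add_sub_of_le (mem_range_succ_iff.mp hh)]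
      rw [neg_pow]
      simp only [zero_add, range_one, sum_singleton, pow_zero, one_div, zero_tsub, mul_one,
        Nat.factorial_zero, Nat.cast_one, CharP.cast_eq_zero, add_zero, div_one]
      field_simp
      linear_combination -(h : ℚ) * hpow

lemma coeff_one_coeff_changeVar_hookSeries (j : ℕ) :
    coeff 1 (coeff (j + 1) (changeVar hookSeries)) = -1 / (j + 2)! := by
  have hvanish : ∑ h ∈ range (j + 2),
      (h : ℚ) ^ (j + 1) * (-1) ^ (j + 1 - h) / ((h + 1)! * (j + 1 - h)!) + -1 / (j + 2)! = 0 := by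
    rw [← sum_neg_pow_div_factorial_mul_pow (show j + 1 < j + 2 by omega) (-1),
      sum_range_succ' _ (j + 2)]
    have hsign : (-1 : ℚ) ^ (j + 1) * (-1) ^ (j + 2) = -1 := by
      rw [← pow_add, Odd.neg_one_pow ⟨j + 1, by ring⟩]
    congr 1
    · simp
    · simp [hsign]
  rw [coeff_coeff_changeVar_hookSeries]
  trans -∑ h ∈ range (j + 2), (h : ℚ) ^ (j + 1) * (-1) ^ (j + 1 - h) / ((h + 1)! * (j + 1 - h)!)
  · rw [← sum_neg_distrib]
    refine sum_congr rfl fun h hh => ?_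
    rw [sum_hookNumber_mul]
    rcases eq_or_ne h 0 with rfl | h0
    · simp
    · have : (h : ℚ) ≠ 0 := mod_cast h0
      have hpow : (h : ℚ) ^ (j + 1) = h ^ h * h ^ (j + 1 - h) := by
        rw [← pow_add, Nat.add_sub_of_le (mem_range_succ_iff.mp hh)]
      rw [neg_pow, hpow, Nat.factorial_succ]
      simp only [sum_range_succ, range_one, sum_singleton, CharP.cast_eq_zero, add_zero,
        tsub_zero, pow_one, mul_neg, mul_one, Nat.factorial_zero, Nat.cast_one, Nat.factorial_one,
        div_one, tsub_self, pow_zero, Nat.cast_mul, Nat.cast_add]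
      field_simp
      ring
  · exact neg_eq_iff_add_eq_zero.mpr hvanish

lemma coeff_changeVar_hookSeries_eq_zero (n j : ℕ) :
    coeff (n + 2) (coeff j (changeVar hookSeries)) = 0 := by
  rw [coeff_coeff_changeVar_hookSeries]
  refine sum_eq_zero fun h _ => ?_
  rw [sum_hookNumber_mul]
  rcases eq_or_ne h 0 with rfl | h0
  · simp
  · have hpos (N : ℕ) : (h + N : ℚ) ≠ 0 := by positivity
    have hterm (N : ℕ) : (h + N : ℚ) ^ (n + 2) / (h + N) ^ 2 = (h + N) ^ n := by
      rw [pow_add, mul_div_cancel_right₀ _ (pow_ne_zero 2 (hpos N))]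
    simp only [hterm]
    rw [sum_neg_pow_div_factorial_mul_pow (by omega), mul_zero, mul_zero]

lemma coeff_changeVar_hookSeries (j : ℕ) :
    coeff j (changeVar hookSeries) =
      (if j = 1 then 1 else 0) - C (if j = 0 then 0 else 1 / ((j + 1)! : ℚ)) * X := by
  ext n
  rcases n with _ | _ | n
  · rw [coeff_zero_coeff_changeVar_hookSeries]
    split_ifs <;> simp
  · rcases j with _ | j
    · rw [coeff_coeff_changeVar_hookSeries]
      simp [hookNumber]
    · rw [zero_add, coeff_one_coeff_changeVar_hookSeries, if_neg j.succ_ne_zero]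
      split_ifs <;> simp [coeff_one, neg_div]
  · rw [coeff_changeVar_hookSeries_eq_zero]
    split_ifs <;> simp [coeff_one]

lemma changeVar_hookSeries_kernel :
    C X * exp ℚ⟦X⟧ + X * changeVar hookSeries = X ^ 2 + C X * X + C X := by
  ext1 j
  rcases j with _ | _ | j
  · simp
  · simp [coeff_succ_X_mul, coeff_changeVar_hookSeries, coeff_X_pow]
  · simp [coeff_succ_X_mul, coeff_changeVar_hookSeries, coeff_X_pow, mul_comm X (C _)]

/-- The reflection step `u + v + u v`, with outer variable `v`. -/
noncomputable def reflectionStep : ℚ⟦X⟧⟦X⟧ := C X + X + C X * X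

/-- The series `exp (-u v) (v exp (-v) - u exp (-u))`, with outer variable `v`. -/
noncomputable def reflectionSeed : ℚ⟦X⟧⟦X⟧ :=
  rescale (-X) (exp ℚ⟦X⟧) * (X * rescale (-1) (exp ℚ⟦X⟧) - C (X * rescale (-1) (exp ℚ)))

/-- Antisymmetry of a double series under exchange of its two variables. -/
def IsAntisymm (f : ℚ⟦X⟧⟦X⟧) : Prop :=
  ∀ n m, coeff n (coeff m f) = -coeff m (coeff n f)

lemma coeff_coeff_reflectionStep_mul (f : ℚ⟦X⟧⟦X⟧) (n m : ℕ) :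
    coeff (n + 1) (coeff (m + 1) (reflectionStep * f)) =
      coeff n (coeff (m + 1) f) + coeff (n + 1) (coeff m f) + coeff n (coeff m f) := by
  simp [reflectionStep, add_mul, mul_assoc, coeff_succ_X_mul]

lemma coeff_zero_coeff_reflectionStep_mul (f : ℚ⟦X⟧⟦X⟧) (m : ℕ) :
    coeff 0 (coeff (m + 1) (reflectionStep * f)) = coeff 0 (coeff m f) := by
  simp [reflectionStep, add_mul, mul_assoc, coeff_succ_X_mul]

lemma IsAntisymm.reflectionStep_mul {f : ℚ⟦X⟧⟦X⟧} (hf : IsAntisymm f) :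
    IsAntisymm (reflectionStep * f) := by
  have hzero (n : ℕ) : coeff (n + 1) (coeff 0 (reflectionStep * f)) = coeff n (coeff 0 f) := by
    simp [reflectionStep, add_mul, mul_assoc, coeff_succ_X_mul]
  rintro (_ | n) (_ | m)
  · simp [reflectionStep, mul_assoc, add_mul]
  · rw [coeff_zero_coeff_reflectionStep_mul, hzero, hf]
  · rw [coeff_zero_coeff_reflectionStep_mul, hzero, hf]
  · rw [coeff_coeff_reflectionStep_mul, coeff_coeff_reflectionStep_mul, hf n, hf (n + 1), hf n]
    ring

lemma reflectionSeed_eq :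
    reflectionSeed = X * rescale (-(1 + X)) (exp ℚ⟦X⟧) -
      C (X * rescale (-1) (exp ℚ)) * rescale (-X) (exp ℚ⟦X⟧) := by
  have hexp : rescale (-X) (exp ℚ⟦X⟧) * rescale (-1) (exp ℚ⟦X⟧) =
      rescale (-(1 + X)) (exp ℚ⟦X⟧) := by
    rw [exp_mul_exp_eq_exp_add]
    ring_nf
  rw [reflectionSeed, ← hexp]
  ring

lemma coeff_coeff_X_mul_exp (n m : ℕ) :
    coeff n (coeff m (X * rescale (-(1 + X)) (exp ℚ⟦X⟧))) =
      if n < m then (-1 : ℚ) ^ (m - 1) / (n ! * (m - 1 - n)!) else 0 := by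
  rcases m with _ | m
  · simp
  have hchoose : coeff n ((1 + X : ℚ⟦X⟧) ^ m) = m.choose n := by
    rw [← Polynomial.coeff_one_add_X_pow ℚ m n, ← Polynomial.coeff_coe]
    simp
  have hC : algebraMap ℚ ℚ⟦X⟧ (1 / m !) = C (1 / m ! : ℚ) := rfl
  rw [coeff_succ_X_mul, coeff_rescale_exp, hC, coeff_mul_C, neg_pow, ← map_one C, ← map_neg,
    ← map_pow, coeff_C_mul, map_one, hchoose, Nat.add_sub_cancel]
  split_ifs with h
  · rw [Nat.cast_choose ℚ (Nat.lt_succ_iff.mp h)]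
    field_simp
  · rw [Nat.choose_eq_zero_of_lt (by omega)]
    simp

lemma coeff_coeff_C_mul_exp (n m : ℕ) :
    coeff n (coeff m (C (X * rescale (-1) (exp ℚ)) * rescale (-X) (exp ℚ⟦X⟧))) =
      if m < n then (-1 : ℚ) ^ (n - 1) / (m ! * (n - 1 - m)!) else 0 := by
  have hC : algebraMap ℚ ℚ⟦X⟧ (1 / m !) = C (1 / m ! : ℚ) := rfl
  rw [coeff_C_mul, coeff_rescale_exp, hC, neg_pow, ← map_one C, ← map_neg, ← map_pow,
    show X * rescale (-1) (exp ℚ) * (C ((-1) ^ m) * X ^ m * C (1 / (m ! : ℚ))) =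
      C ((-1 : ℚ) ^ m * (1 / m !)) * (X ^ (m + 1) * rescale (-1) (exp ℚ)) by rw [map_mul]; ring,
    coeff_C_mul, coeff_X_pow_mul', coeff_rescale_exp]
  by_cases h : m < n
  · obtain ⟨k, rfl⟩ := Nat.exists_eq_add_of_le h
    rw [if_pos h, if_pos (by omega), Nat.add_sub_cancel_left, show m.succ + k - 1 = m + k by omega,
      Nat.add_sub_cancel_left, pow_add, Algebra.algebraMap_self, RingHom.id_apply]
    field_simp
  · rw [if_neg (by omega), if_neg h, mul_zero]

lemma isAntisymm_reflectionSeed : IsAntisymm reflectionSeed := fun n m => by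
  simp only [reflectionSeed_eq, map_sub, coeff_coeff_X_mul_exp, coeff_coeff_C_mul_exp, neg_sub]

lemma coeff_coeff_changeVar_X (n j : ℕ) :
    coeff n (coeff j (changeVar X)) = coeff n (coeff (n + j) reflectionSeed) := by
  rw [reflectionSeed_eq, map_sub, map_sub, coeff_coeff_X_mul_exp, coeff_coeff_C_mul_exp,
    if_neg (by omega : ¬ n + j < n), sub_zero, changeVar_X, lambertSeries]
  rcases j with _ | j
  · simp
  rw [mul_assoc, coeff_C_mul, coeff_succ_X_mul, coeff_rescale_exp, if_pos (by omega),
    show n + (j + 1) - 1 = n + j by omega, Nat.add_sub_cancel_left,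
    show (-1 : ℚ⟦X⟧) ^ j * algebraMap ℚ ℚ⟦X⟧ (1 / j !) = C ((-1 : ℚ) ^ j * (1 / j !)) by
      rw [map_mul, map_pow, map_neg, map_one]; rfl,
    coeff_mul_C, coeff_rescale_exp, pow_add, Algebra.algebraMap_self, RingHom.id_apply]
  field_simp

/-- The generating series `∑ starNumber r N h * x ^ N * y ^ h`, with outer variable `y`. In the
recursion one more star transposition either joins a fixed point to the cycle through the centre
or cuts off a part of this cycle, which is then counted by `hookSeries`. -/
noncomputable def starSeries : ℕ → ℚ⟦X⟧⟦X⟧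
  | 0 => 1
  | r + 1 => C X * PowerSeries.mk (fun h => coeff (h + 1) (starSeries r)) +
      hookSeries * starSeries r

/-- The normalised number of minimal transitive factorisations of a cycle of length `h + 1` with
`N` fixed points into `r` transpositions containing a given point of the cycle, followed by
`q = 2 * N + h - r` transpositions fixing it: this number is `q ! * N ! * starNumber r N h`. -/
noncomputable def starNumber (r N h : ℕ) : ℚ := coeff N (coeff h (starSeries r))

lemma starNumber_zero (N h : ℕ) : starNumber 0 N h = if N = 0 ∧ h = 0 then 1 else 0 := by
  rw [starNumber, starSeries, coeff_one]
  split_ifs <;> simp_all [coeff_one]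

lemma starNumber_succ (r N h : ℕ) :
    starNumber (r + 1) N h = (if N = 0 then 0 else starNumber r (N - 1) (h + 1)) +
      ∑ p ∈ antidiagonal h, ∑ s ∈ antidiagonal N, hookNumber s.1 p.1 * starNumber r s.2 p.2 := by
  rw [starNumber, starSeries, map_add, map_add, coeff_C_mul, coeff_mk, coeff_mul _ hookSeries,
    map_sum]
  congr 1
  · cases N with
    | zero => rw [if_pos rfl, coeff_zero_X_mul]
    | succ N => rw [if_neg N.succ_ne_zero, coeff_succ_X_mul, starNumber, Nat.add_sub_cancel]
  · exact sum_congr rfl fun p _ => by simp only [coeff_mul, coeff_coeff_hookSeries, starNumber]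

lemma starNumber_eq_zero {r N h : ℕ} (hr : 2 * N + h < r) : starNumber r N h = 0 := by
  induction r generalizing N h with
  | zero => omega
  | succ r ih =>
    rw [starNumber_succ, sum_eq_zero, add_zero]
    · split_ifs with hN
      · rfl
      · exact ih (by omega)
    · refine fun p hp => sum_eq_zero fun s hs => ?_
      rw [HasAntidiagonal.mem_antidiagonal] at hp hs
      obtain hp₁ | hp₁ := p.1.eq_zero_or_pos
      · rw [hp₁, hookNumber_zero_right, zero_mul]
      · rw [ih (by omega), mul_zero]

lemma X_mul_changeVar_starSeries_succ (r : ℕ) :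
    X * changeVar (X * starSeries (r + 1)) =
      (X ^ 2 + C X * X + C X) * changeVar (X * starSeries r) -
        X * C (substLambert 1 (X * coeff 0 (starSeries r))) := by
  have hshift : X * PowerSeries.mk (fun h => coeff (h + 1) (starSeries r)) =
      starSeries r - C (coeff 0 (starSeries r)) := by
    simpa using (sub_const_eq_X_mul_shift (starSeries r)).symm
  have hrec : X * (X * starSeries (r + 1)) = (C X + X * hookSeries) * (X * starSeries r) -
      X * C (X * coeff 0 (starSeries r)) := by
    rw [starSeries, map_mul C]
    linear_combination C X * X * hshift
  have himage : changeVar X * changeVar (X * starSeries (r + 1)) =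
      (changeVar (C X) + changeVar X * changeVar hookSeries) * changeVar (X * starSeries r) -
        changeVar X * C (substLambert 1 (X * coeff 0 (starSeries r))) := by
    simp only [← changeVar_C, ← map_mul, ← map_add, ← map_sub, hrec]
  linear_combination exp ℚ⟦X⟧ * C (exp ℚ) * himage +
    changeVar (X * starSeries r) * exp_mul_exp_mul_changeVar_C_X +
    changeVar (X * starSeries r) * changeVar_hookSeries_kernel +
    (changeVar hookSeries * changeVar (X * starSeries r) - changeVar (X * starSeries (r + 1)) -
      C (substLambert 1 (X * coeff 0 (starSeries r)))) * exp_mul_exp_mul_changeVar_X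

lemma coeff_succ_changeVar_starSeries_succ (r j : ℕ) :
    coeff (j + 1) (changeVar (X * starSeries (r + 1))) =
      coeff j (changeVar (X * starSeries r)) + X * coeff (j + 1) (changeVar (X * starSeries r)) +
        X * coeff (j + 2) (changeVar (X * starSeries r)) := by
  rw [← coeff_succ_X_mul, X_mul_changeVar_starSeries_succ]
  simp [add_mul, mul_assoc, coeff_X_pow_mul', coeff_succ_X_mul]

lemma isAntisymm_reflectionStep_pow_mul (r : ℕ) :
    IsAntisymm (reflectionStep ^ r * reflectionSeed) := by
  induction r with
  | zero => simpa using isAntisymm_reflectionSeed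
  | succ r ih => simpa only [pow_succ', mul_assoc] using ih.reflectionStep_mul

lemma coeff_coeff_changeVar_starSeries (r n j : ℕ) :
    coeff n (coeff j (changeVar (X * starSeries r))) =
      coeff n (coeff (n + j) (reflectionStep ^ r * reflectionSeed)) := by
  induction r generalizing n j with
  | zero => simp [starSeries, coeff_coeff_changeVar_X]
  | succ r ih =>
    rcases j with _ | j
    · have h : coeff n (coeff n (reflectionStep ^ (r + 1) * reflectionSeed)) = 0 :=
        self_eq_neg.mp (isAntisymm_reflectionStep_pow_mul (r + 1) n n)
      rw [add_zero, h, map_mul, changeVar_X, lambertSeries]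
      simp [mul_assoc]
    · rw [coeff_succ_changeVar_starSeries_succ, pow_succ', mul_assoc]
      rcases n with _ | n
      · rw [zero_add, coeff_zero_coeff_reflectionStep_mul]
        simpa using ih 0 j
      · rw [show n + 1 + (j + 1) = n + j + 1 + 1 by ring, coeff_coeff_reflectionStep_mul]
        simp only [map_add, coeff_succ_X_mul, ih]
        ring_nf

/-- Agreement of two double series in all coefficients of total degree less than `R`. -/
def AgreeBelow (R : ℕ) (f g : ℚ⟦X⟧⟦X⟧) : Prop :=
  ∀ n m, n + m < R → coeff n (coeff m f) = coeff n (coeff m g)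

lemma AgreeBelow.mul_right {R : ℕ} {f g : ℚ⟦X⟧⟦X⟧} (h : AgreeBelow R f g) (k : ℚ⟦X⟧⟦X⟧) :
    AgreeBelow R (f * k) (g * k) := fun n m hR => by
  simp only [coeff_mul, map_sum]
  refine sum_congr rfl fun p hp => sum_congr rfl fun q hq => ?_
  rw [HasAntidiagonal.mem_antidiagonal] at hp hq
  rw [h q.1 p.1 (by omega)]

lemma coeff_reflectionStep_pow (r m : ℕ) :
    coeff m (reflectionStep ^ r) = (r.choose m : ℚ⟦X⟧) * ((1 + X) ^ m * X ^ (r - m)) := by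
  have hterm (k : ℕ) : (C (1 + X : ℚ⟦X⟧) * X) ^ k * C X ^ (r - k) * (r.choose k : ℚ⟦X⟧⟦X⟧) =
      C ((r.choose k : ℚ⟦X⟧) * ((1 + X) ^ k * X ^ (r - k))) * X ^ k := by
    simp only [map_mul, map_pow, map_natCast, mul_pow]
    ring
  have hsplit : reflectionStep = C (1 + X) * X + C X := by
    rw [reflectionStep, map_add, map_one]
    ring
  rw [hsplit, add_pow]
  simp only [hterm, map_sum, coeff_C_mul, coeff_X_pow, mul_ite, mul_one, mul_zero]
  rw [sum_ite_eq, ite_eq_left_iff, mem_range_succ_iff, not_le]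
  intro h
  rw [Nat.choose_eq_zero_of_lt h, Nat.cast_zero, zero_mul]

lemma coeff_sum_choose_div_factorial_mul_X_pow {n m R : ℕ} (hR : n + m < R) :
    coeff n (∑ r ∈ range R, C (r.choose m / r ! : ℚ) * X ^ (r - m) : ℚ⟦X⟧) = 1 / (m ! * n !) := by
  rw [map_sum, sum_eq_single_of_mem (n + m) (mem_range.mpr hR)]
  · rw [Nat.add_sub_cancel, coeff_C_mul, coeff_X_pow_self, Nat.cast_choose ℚ (by omega),
      Nat.add_sub_cancel]
    have := (n + m).factorial_ne_zero
    field_simp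
  · intro r _ hr
    rw [coeff_C_mul, coeff_X_pow]
    rcases lt_or_ge r m with h | h
    · simp [Nat.choose_eq_zero_of_lt h]
    · rw [if_neg (by omega), mul_zero]

lemma agreeBelow_exp_reflectionStep (R : ℕ) :
    AgreeBelow R (∑ r ∈ range R, C (C (1 / r ! : ℚ)) * reflectionStep ^ r)
      (C (exp ℚ) * rescale (1 + X) (exp ℚ⟦X⟧)) := fun n m hR => by
  have hleft : coeff m (∑ r ∈ range R, C (C (1 / r ! : ℚ)) * reflectionStep ^ r) =
      (1 + X) ^ m * ∑ r ∈ range R, C (r.choose m / r ! : ℚ) * X ^ (r - m) := by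
    rw [map_sum, mul_sum]
    refine sum_congr rfl fun r _ => ?_
    rw [coeff_C_mul, coeff_reflectionStep_pow, div_eq_mul_one_div (r.choose m : ℚ), map_mul C,
      map_natCast]
    ring
  have hright : coeff m (C (exp ℚ) * rescale (1 + X) (exp ℚ⟦X⟧)) =
      (1 + X) ^ m * (C (1 / m ! : ℚ) * exp ℚ) := by
    rw [coeff_C_mul, coeff_rescale_exp, show algebraMap ℚ ℚ⟦X⟧ (1 / m !) = C (1 / m ! : ℚ) from rfl]
    ring
  rw [hleft, hright, coeff_mul, coeff_mul]
  refine sum_congr rfl fun p hp => ?_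
  rw [HasAntidiagonal.mem_antidiagonal] at hp
  rw [coeff_sum_choose_div_factorial_mul_X_pow (by omega), coeff_C_mul, coeff_exp,
    Algebra.algebraMap_self, RingHom.id_apply, one_div_mul_one_div]

lemma exp_mul_exp_mul_reflectionSeed :
    C (exp ℚ) * rescale (1 + X) (exp ℚ⟦X⟧) * reflectionSeed = X * C (exp ℚ) - C X * exp ℚ⟦X⟧ := by
  have hexp : rescale (1 + X) (exp ℚ⟦X⟧) * rescale (-(1 + X)) (exp ℚ⟦X⟧) = 1 := by
    rw [exp_mul_exp_eq_exp_add, add_neg_cancel, rescale_zero]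
    simp
  have hexp' : rescale (1 + X) (exp ℚ⟦X⟧) * rescale (-X) (exp ℚ⟦X⟧) = exp ℚ⟦X⟧ := by
    rw [exp_mul_exp_eq_exp_add, add_neg_cancel_right, rescale_one, RingHom.id_apply]
  rw [reflectionSeed_eq, map_mul C]
  linear_combination X * C (exp ℚ) * hexp -
    C X * C (exp ℚ) * C (rescale (-1) (exp ℚ)) * hexp' - C X * exp ℚ⟦X⟧ * C_exp_mul_C_exp_neg

lemma coeff_coeff_changeVar_hookSeries_eq_exp (n j : ℕ) :
    coeff n (coeff j (changeVar hookSeries)) =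
      coeff n (coeff (n + j) (X * C (exp ℚ) - C X * exp ℚ⟦X⟧)) := by
  have hexp (m : ℕ) : coeff n (coeff m (X * C (exp ℚ) - C X * exp ℚ⟦X⟧)) =
      (if m = 1 then 1 / (n ! : ℚ) else 0) - if n = 1 then 1 / (m ! : ℚ) else 0 := by
    rw [map_sub, map_sub, coeff_mul_C, coeff_C_mul, coeff_exp,
      show algebraMap ℚ ℚ⟦X⟧ (1 / m !) = C (1 / m ! : ℚ) from rfl, coeff_mul_C, coeff_X, coeff_X]
    split_ifs <;> simp
  rw [coeff_changeVar_hookSeries, map_sub, coeff_C_mul, coeff_X, hexp]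
  rcases n with _ | _ | n
  · rcases j with _ | _ | j <;> simp
  · rcases j with _ | _ | j <;> simp [coeff_one, add_comm 1]
  · rw [if_neg (by omega : ¬ n + 1 + 1 + j = 1)]
    split_ifs <;> simp_all [coeff_one]

lemma sum_starNumber_div_factorial (N k : ℕ) :
    ∑ r ∈ range (2 * N + k + 1), starNumber r N k / r ! = hookNumber N (k + 1) := by
  have hlast : starNumber (2 * N + k + 1) N k / (2 * N + k + 1)! = 0 := by
    rw [starNumber_eq_zero (by omega), zero_div]
  rw [← add_zero (∑ r ∈ _, _), ← hlast, ← sum_range_succ]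
  obtain ⟨R, hR⟩ : ∃ R, R = 2 * N + k + 1 + 1 := ⟨_, rfl⟩
  rw [← hR]
  have hΦ : ∀ n j, 2 * n + j < R → coeff n (coeff j (changeVar
      (∑ r ∈ range R, C (C (1 / r ! : ℚ)) * (X * starSeries r) - hookSeries))) = 0 := by
    intro n j hnj
    have hagree := (agreeBelow_exp_reflectionStep R).mul_right reflectionSeed n (n + j) (by omega)
    rw [exp_mul_exp_mul_reflectionSeed, ← coeff_coeff_changeVar_hookSeries_eq_exp] at hagree
    rw [map_sub, map_sub, map_sub, ← hagree, sub_eq_zero, map_sum, sum_mul]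
    simp only [map_sum, map_mul changeVar (C _), changeVar_C, substLambert_C, mul_assoc,
      coeff_C_mul, coeff_coeff_changeVar_starSeries]
  have hzero := coeff_eq_zero_of_coeff_changeVar_eq_zero hΦ N (k + 1) (by omega)
  rw [map_sub, map_sub, coeff_coeff_hookSeries, sub_eq_zero] at hzero
  rw [← hzero, map_sum, map_sum]
  refine sum_congr rfl fun r _ => ?_
  rw [coeff_C_mul, coeff_C_mul, coeff_succ_X_mul, ← starNumber, one_div_mul_eq_div]

end GeneratingSeries

section Relations

open Finset

variable {α : Type*}

/-- The equivalence relation whose only class that may have several elements is `A`. -/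
def blockSetoid (A : Finset α) : Setoid α where
  r x y := x = y ∨ (x ∈ A ∧ y ∈ A)
  iseqv := by
    refine ⟨fun _ => Or.inl rfl, fun h => h.imp Eq.symm And.symm, ?_⟩
    rintro x y z (rfl | h) (rfl | h')
    exacts [Or.inl rfl, Or.inr h', Or.inr h, Or.inr ⟨h.1, h'.2⟩]

lemma blockSetoid_apply {A : Finset α} {x y : α} :
    blockSetoid A x y ↔ x = y ∨ (x ∈ A ∧ y ∈ A) := Iff.rfl

lemma blockSetoid_of_mem {A : Finset α} {x y : α} (hx : x ∈ A) (hy : y ∈ A) :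
    blockSetoid A x y := Or.inr ⟨hx, hy⟩

lemma blockSetoid_le_iff {A : Finset α} {E : Setoid α} :
    blockSetoid A ≤ E ↔ ∀ x ∈ A, ∀ y ∈ A, E x y := by
  refine ⟨fun h x hx y hy => h (blockSetoid_of_mem hx hy), ?_⟩
  rintro h x y (rfl | ⟨hx, hy⟩)
  exacts [E.refl _, h x hx y hy]

lemma blockSetoid_mono {A B : Finset α} (h : A ⊆ B) : blockSetoid A ≤ blockSetoid B :=
  blockSetoid_le_iff.2 fun _ hx _ hy => blockSetoid_of_mem (h hx) (h hy)

lemma sameCycle_setoid_le_iff {σ : Perm α} {E : Setoid α} :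
    Perm.SameCycle.setoid σ ≤ E ↔ ∀ x, E x (σ x) := by
  refine ⟨fun h x => h ⟨1, by rw [zpow_one]⟩, fun h x y ⟨i, hi⟩ => ?_⟩
  suffices ∀ i : ℤ, E x ((σ ^ i) x) from hi ▸ this i
  intro i
  induction i with
  | zero => exact E.refl x
  | succ i ih =>
    rw [add_comm, zpow_one_add]
    exact E.trans ih (h _)
  | pred i ih =>
    have hpred := h ((σ ^ (-(i : ℤ) - 1)) x)
    rw [← Perm.mul_apply, ← zpow_one_add, add_sub_cancel] at hpred
    exact E.trans ih (E.symm hpred)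

lemma sameCycle_setoid_apply_self (σ : Perm α) (x : α) : Perm.SameCycle.setoid σ x (σ x) :=
  sameCycle_setoid_le_iff.1 le_rfl x

lemma sameCycle_setoid_one : Perm.SameCycle.setoid (1 : Perm α) = ⊥ :=
  le_bot_iff.1 (sameCycle_setoid_le_iff.2 fun _ => rfl)

lemma sameCycle_setoid_mul_le (σ τ : Perm α) :
    Perm.SameCycle.setoid (τ * σ) ≤ Perm.SameCycle.setoid τ ⊔ Perm.SameCycle.setoid σ :=
  sameCycle_setoid_le_iff.2 fun x => Setoid.trans' _
    (le_sup_right (a := Perm.SameCycle.setoid τ) (sameCycle_setoid_apply_self σ x))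
    (le_sup_left (b := Perm.SameCycle.setoid σ) (sameCycle_setoid_apply_self τ (σ x)))

lemma apply_eq_self_of_setoid_le {σ : Perm α} {A : Finset α}
    (h : Perm.SameCycle.setoid σ ≤ blockSetoid A) {x : α} (hx : x ∉ A) : σ x = x :=
  ((sameCycle_setoid_le_iff.1 h x).resolve_right fun hx' => hx hx'.1).symm

lemma apply_mem_of_setoid_le {σ : Perm α} {A : Finset α}
    (h : Perm.SameCycle.setoid σ ≤ blockSetoid A) {x : α} (hx : x ∈ A) : σ x ∈ A :=
  (sameCycle_setoid_le_iff.1 h x).elim (fun hfix => hfix ▸ hx) And.right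

lemma sup_apply_of_disjoint {B C : Finset α} (h : Disjoint B C) {E F : Setoid α}
    (hE : E ≤ blockSetoid B) (hF : F ≤ blockSetoid C) {x y : α} :
    (E ⊔ F) x y ↔ E x y ∨ F x y := by
  have htrans {x y z : α} (hxy : E x y) (hyz : F y z) : E x z ∨ F x z := by
    rcases hE hxy with rfl | hB
    · exact Or.inr hyz
    rcases hF hyz with rfl | hC
    · exact Or.inl hxy
    · exact absurd hC.1 (disjoint_left.1 h hB.2)
  let K : Setoid α :=
    { r := fun x y => E x y ∨ F x y
      iseqv := by
        refine ⟨fun x => Or.inl (E.refl x), fun hxy => hxy.imp E.symm F.symm, ?_⟩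
        rintro x y z (hxy | hxy) (hyz | hyz)
        · exact Or.inl (E.trans hxy hyz)
        · exact htrans hxy hyz
        · exact (htrans (E.symm hyz) (F.symm hxy)).imp E.symm F.symm
        · exact Or.inr (F.trans hxy hyz) }
  have hle : E ⊔ F ≤ K := sup_le (fun _ _ => Or.inl) fun _ _ => Or.inr
  exact ⟨fun hxy => hle hxy, fun hxy => hxy.elim (fun hE => le_sup_left (b := F) hE)
    fun hF => le_sup_right (a := E) hF⟩

lemma sup_inf_blockSetoid_of_disjoint {B C : Finset α} (h : Disjoint B C) {E F : Setoid α}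
    (hE : E ≤ blockSetoid B) (hF : F ≤ blockSetoid C) : (E ⊔ F) ⊓ blockSetoid B = E := by
  refine le_antisymm ?_ (le_inf le_sup_left hE)
  rintro x y ⟨hxy, rfl | ⟨hx, hy⟩⟩
  · exact E.refl x
  rcases (sup_apply_of_disjoint h hE hF).1 hxy with hxy | hxy
  · exact hxy
  rcases hF hxy with rfl | ⟨hx', -⟩
  · exact E.refl x
  · exact absurd hx' (disjoint_left.1 h hx)

variable [DecidableEq α]

lemma sameCycle_setoid_swap_le_iff {a b : α} {E : Setoid α} :
    Perm.SameCycle.setoid (swap a b) ≤ E ↔ E a b := by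
  rw [sameCycle_setoid_le_iff]
  refine ⟨fun h => by simpa only [swap_apply_left] using h a, fun h x => ?_⟩
  rw [swap_apply_def]
  split_ifs with ha hb
  exacts [ha ▸ h, hb ▸ E.symm h, E.refl x]

lemma blockSetoid_sdiff_sup_apply {A B : Finset α} {x y : α} :
    (blockSetoid (A \ B) ⊔ blockSetoid B) x y ↔
      x = y ∨ (x ∈ A \ B ∧ y ∈ A \ B) ∨ (x ∈ B ∧ y ∈ B) := by
  rw [sup_apply_of_disjoint sdiff_disjoint le_rfl le_rfl, blockSetoid_apply, blockSetoid_apply]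
  tauto

lemma blockSetoid_sdiff_sup_apply_of_mem_sdiff {A B : Finset α} {a x : α} (ha : a ∈ A \ B) :
    (blockSetoid (A \ B) ⊔ blockSetoid B) a x ↔ x ∈ A \ B := by
  refine blockSetoid_sdiff_sup_apply.trans ⟨?_, fun hx => Or.inr (Or.inl ⟨ha, hx⟩)⟩
  rintro (rfl | h | h)
  exacts [ha, h.2, absurd h.1 (mem_sdiff.1 ha).2]

lemma blockSetoid_sdiff_sup_apply_of_mem {A B : Finset α} {b x : α} (hb : b ∈ B) :
    (blockSetoid (A \ B) ⊔ blockSetoid B) b x ↔ x ∈ B := by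
  refine blockSetoid_sdiff_sup_apply.trans ⟨?_, fun hx => Or.inr (Or.inr ⟨hb, hx⟩)⟩
  rintro (rfl | h | h)
  exacts [hb, absurd hb (mem_sdiff.1 h.1).2, h.2]

/-- The quotient map of `E` followed by the identification of the class of `b` with that of `a`. -/
noncomputable def mergeMap (E : Setoid α) (a b : α) (x : α) : Quotient E :=
  open Classical in if E x b then Quotient.mk E a else Quotient.mk E x

lemma swap_sup_le_ker_mergeMap (E : Setoid α) (a b : α) :
    Perm.SameCycle.setoid (swap a b) ⊔ E ≤ Setoid.ker (mergeMap E a b) := by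
  refine sup_le (sameCycle_setoid_swap_le_iff.2 ?_) fun x y hxy => ?_
  · rw [Setoid.ker_def, mergeMap, mergeMap, if_pos (E.refl b), ite_self]
  · have hiff : E x b ↔ E y b := ⟨E.trans (E.symm hxy), E.trans hxy⟩
    rw [Setoid.ker_def, mergeMap, mergeMap, Quotient.sound hxy]
    classical exact if_congr hiff rfl rfl

lemma setoid_of_swap_sup {E : Setoid α} {a b x : α}
    (h : (Perm.SameCycle.setoid (swap a b) ⊔ E) x a) : E x a ∨ E x b := by
  have hker : mergeMap E a b x = mergeMap E a b a := swap_sup_le_ker_mergeMap E a b h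
  by_cases hxb : E x b
  · exact Or.inr hxb
  · rw [mergeMap, mergeMap, if_neg hxb, ite_self] at hker
    exact Or.inl (Quotient.exact hker)

lemma swap_sup_blockSetoid_sdiff_sup {A B : Finset α} {a b : α} (ha : a ∈ A \ B) (hb : b ∈ B)
    (hB : B ⊆ A) : Perm.SameCycle.setoid (swap a b) ⊔ (blockSetoid (A \ B) ⊔ blockSetoid B) =
      blockSetoid A := by
  have haA : a ∈ A := (mem_sdiff.1 ha).1
  refine le_antisymm (sup_le (sameCycle_setoid_swap_le_iff.2 (blockSetoid_of_mem haA (hB hb)))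
    (sup_le (blockSetoid_mono sdiff_subset) (blockSetoid_mono hB))) ?_
  set E := Perm.SameCycle.setoid (swap a b) ⊔ (blockSetoid (A \ B) ⊔ blockSetoid B)
  have hEab : E a b := sameCycle_setoid_swap_le_iff.1 le_sup_left
  have hEa : ∀ x ∈ A, E x a := fun x hx => by
    by_cases hxB : x ∈ B
    · exact E.trans (blockSetoid_le_iff.1 (le_sup_right.trans le_sup_right) x hxB b hb)
        (E.symm hEab)
    · exact blockSetoid_le_iff.1 (le_sup_left.trans le_sup_right) x (mem_sdiff.2 ⟨hx, hxB⟩) a ha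
  exact blockSetoid_le_iff.2 fun x hx y hy => E.trans (hEa x hx) (E.symm (hEa y hy))

lemma eq_blockSetoid_sdiff_sup_of_swap_sup_eq {A : Finset α} {a b : α} (ha : a ∈ A) (hb : b ∈ A)
    {E : Setoid α} (hab : ¬ E a b)
    (h : Perm.SameCycle.setoid (swap a b) ⊔ E = blockSetoid A) :
    ∃ B ⊆ A.erase a, b ∈ B ∧ E = blockSetoid (A \ B) ⊔ blockSetoid B := by
  classical
  have hE : E ≤ blockSetoid A := h ▸ le_sup_right
  have hcases : ∀ x ∈ A, E x a ∨ E x b := fun x hx =>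
    setoid_of_swap_sup (h ▸ blockSetoid_of_mem hx ha)
  refine ⟨A.filter fun x => E x b, fun x hx => ?_, mem_filter.2 ⟨hb, E.refl b⟩,
    le_antisymm (fun x y hxy => ?_) (sup_le ?_ ?_)⟩
  · obtain ⟨hxA, hxb⟩ := mem_filter.1 hx
    exact mem_erase.2 ⟨fun hxa => hab (hxa ▸ hxb), hxA⟩
  · rw [blockSetoid_sdiff_sup_apply]
    rcases hE hxy with rfl | ⟨hx, hy⟩
    · exact Or.inl rfl
    have hiff : E x b ↔ E y b := ⟨E.trans (E.symm hxy), E.trans hxy⟩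
    simp only [mem_sdiff, mem_filter, hx, hy, hiff]
    tauto
  · refine blockSetoid_le_iff.2 fun x hx y hy => ?_
    simp only [mem_sdiff, mem_filter, not_and] at hx hy
    exact E.trans ((hcases x hx.1).resolve_right (hx.2 hx.1))
      (E.symm ((hcases y hy.1).resolve_right (hy.2 hy.1)))
  · exact blockSetoid_le_iff.2 fun x hx y hy =>
      E.trans (mem_filter.1 hx).2 (E.symm (mem_filter.1 hy).2)

end Relations

section RiemannHurwitz

open Finset

variable {α : Type*}

/-- A permutation together with an equivalence relation: the state reached by a partial product of
permutations records the product and the orbit relation of the group generated so far. -/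
@[ext] structure State (α : Type*) where
  perm : Perm α
  rel : Setoid α

namespace State

instance : Monoid (State α) where
  one := ⟨1, ⊥⟩
  mul s t := ⟨s.perm * t.perm, s.rel ⊔ t.rel⟩
  mul_assoc _ _ _ := State.ext (mul_assoc _ _ _) (sup_assoc _ _ _)
  one_mul _ := State.ext (one_mul _) (bot_sup_eq _)
  mul_one _ := State.ext (mul_one _) (sup_bot_eq _)

lemma one_def : (1 : State α) = ⟨1, ⊥⟩ := rfl

lemma mul_perm (s t : State α) : (s * t).perm = s.perm * t.perm := rfl

lemma mul_rel (s t : State α) : (s * t).rel = s.rel ⊔ t.rel := rfl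

/-- The state of the one-letter word `τ`. -/
def ofPerm (τ : Perm α) : State α := ⟨τ, Perm.SameCycle.setoid τ⟩

lemma ofPerm_rel (τ : Perm α) : (ofPerm τ).rel = Perm.SameCycle.setoid τ := rfl

/-- The state of a word of permutations. -/
def ofWord (w : List (Perm α)) : State α := (w.map ofPerm).prod

lemma ofWord_nil : ofWord ([] : List (Perm α)) = 1 := rfl

lemma ofWord_cons (τ : Perm α) (w : List (Perm α)) : ofWord (τ :: w) = ofPerm τ * ofWord w :=
  List.prod_cons

lemma ofWord_perm (w : List (Perm α)) : (ofWord w).perm = w.prod := by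
  induction w with
  | nil => rfl
  | cons τ w ih => rw [ofWord_cons, List.prod_cons, mul_perm, ih, ofPerm]

lemma ofWord_rel_le_iff {w : List (Perm α)} {E : Setoid α} :
    (ofWord w).rel ≤ E ↔ ∀ τ ∈ w, Perm.SameCycle.setoid τ ≤ E := by
  induction w with
  | nil => simp [ofWord_nil, one_def]
  | cons τ w ih => rw [ofWord_cons, List.forall_mem_cons, ← ih, mul_rel, sup_le_iff, ofPerm_rel]

lemma sameCycle_setoid_ofWord_perm_le (w : List (Perm α)) :
    Perm.SameCycle.setoid (ofWord w).perm ≤ (ofWord w).rel := by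
  induction w with
  | nil => exact sameCycle_setoid_one.le
  | cons τ w ih =>
    rw [ofWord_cons]
    exact (sameCycle_setoid_mul_le _ _).trans (sup_le_sup_left ih _)

end State

/-- The number of classes of an equivalence relation. -/
noncomputable def numClasses (E : Setoid α) : ℕ := Nat.card (Quotient E)

lemma numClasses_bot : numClasses (⊥ : Setoid α) = Nat.card α :=
  (Nat.card_eq_of_bijective _ ⟨fun _ _ h => Quotient.exact h, Quotient.mk_surjective⟩).symm

section Finite

variable [Finite α]

lemma numClasses_anti {E F : Setoid α} (h : E ≤ F) : numClasses F ≤ numClasses E :=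
  Nat.card_le_card_of_surjective (Quotient.map' id fun _ _ hxy => h hxy)
    (Quotient.ind fun x => ⟨Quotient.mk E x, rfl⟩)

lemma numClasses_lt {E F : Setoid α} (h : E ≤ F) {a b : α} (hE : ¬ E a b) (hF : F a b) :
    numClasses F < numClasses E := by
  refine (numClasses_anti h).lt_of_ne fun hcard => hE (Quotient.exact ?_)
  refine ((Nat.bijective_iff_surjective_and_card
    (Quotient.map' id (fun _ _ hxy => h hxy) : Quotient E → Quotient F)).2
    ⟨Quotient.ind fun x => ⟨Quotient.mk E x, rfl⟩, hcard.symm⟩).1 ?_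
  exact Quotient.sound hF

lemma numClasses_blockSetoid_add_card_le {A : Finset α} (hA : A.Nonempty) :
    numClasses (blockSetoid A) + #A ≤ Nat.card α + 1 := by
  classical
  have := Fintype.ofFinite α
  obtain ⟨a, ha⟩ := hA
  let f : Option {x // x ∈ Aᶜ} → Quotient (blockSetoid A) :=
    fun o => Quotient.mk _ (o.elim a Subtype.val)
  have hf : Function.Surjective f := Quotient.ind fun x => by
    by_cases hx : x ∈ A
    · exact ⟨none, Quotient.sound (blockSetoid_of_mem ha hx)⟩
    · exact ⟨some ⟨x, mem_compl.2 hx⟩, rfl⟩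
  have hcard := Nat.card_le_card_of_surjective f hf
  rw [Nat.card_eq_fintype_card (α := Option _), Fintype.card_option, Fintype.card_coe,
    card_compl] at hcard
  have := card_le_univ A
  rw [numClasses, Nat.card_eq_fintype_card (α := α)]
  omega

variable [DecidableEq α]

lemma numClasses_le_swap_sup (E : Setoid α) (a b : α) :
    numClasses E ≤ numClasses (Perm.SameCycle.setoid (swap a b) ⊔ E) + 1 := by
  have hker : numClasses (Setoid.ker (mergeMap E a b)) = (Set.range (mergeMap E a b)).ncard :=
    Nat.card_congr (Setoid.quotientKerEquivRange _)
  have hcover : Set.univ ⊆ insert (Quotient.mk E b) (Set.range (mergeMap E a b)) := by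
    rintro ⟨x⟩ -
    by_cases hx : E x b
    · exact Or.inl (Quotient.sound hx)
    · exact Or.inr ⟨x, if_neg hx⟩
  have hcard := (Set.ncard_le_ncard hcover).trans (Set.ncard_insert_le _ _)
  rw [Set.ncard_univ, ← hker] at hcard
  exact hcard.trans (Nat.succ_le_succ (numClasses_anti (swap_sup_le_ker_mergeMap E a b)))

lemma numClasses_le_swap_mul (σ : Perm α) (a b : α) :
    numClasses (Perm.SameCycle.setoid σ) ≤
      numClasses (Perm.SameCycle.setoid (swap a b * σ)) + 1 :=
  (numClasses_le_swap_sup _ a b).trans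
    (Nat.succ_le_succ (numClasses_anti (sameCycle_setoid_mul_le σ (swap a b))))

lemma numClasses_swap_mul_le (σ : Perm α) (a b : α) :
    numClasses (Perm.SameCycle.setoid (swap a b * σ)) ≤
      numClasses (Perm.SameCycle.setoid σ) + 1 := by
  simpa only [swap_mul_self_mul] using numClasses_le_swap_mul (swap a b * σ) a b

lemma sameCycle_swap_mul {σ : Perm α} {a b : α} (h : ¬ σ.SameCycle a b) :
    (swap a b * σ).SameCycle a b := by
  set p := Function.minimalPeriod σ a
  have hp : 0 < p := Function.minimalPeriod_pos_of_mem_periodicPts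
    (Function.Injective.mem_periodicPts σ.injective a)
  have hstep (i : ℕ) : (swap a b * σ) (σ^[i] a) = swap a b (σ^[i + 1] a) := by
    rw [Perm.mul_apply, ← Function.iterate_succ_apply' σ]
  have horbit : ∀ i < p, (swap a b * σ).SameCycle a (σ^[i] a) := by
    intro i hi
    induction i with
    | zero => exact Perm.SameCycle.refl _ a
    | succ i ih =>
      have hne : σ^[i + 1] a ≠ b := fun hb =>
        h ⟨(i + 1 : ℕ), by rw [zpow_natCast, Perm.coe_pow, hb]⟩
      have hne' : σ^[i + 1] a ≠ a :=
        Function.not_isPeriodicPt_of_pos_of_lt_minimalPeriod i.succ_ne_zero hi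
      rw [← swap_apply_of_ne_of_ne hne' hne, ← hstep]
      exact Perm.sameCycle_apply_right.2 (ih (by omega))
  have hlast : (swap a b * σ) (σ^[p - 1] a) = b := by
    rw [hstep, Nat.sub_add_cancel hp, Function.iterate_minimalPeriod, swap_apply_left]
  have hab := Perm.sameCycle_apply_right.2 (horbit (p - 1) (by omega))
  rwa [hlast] at hab

lemma numClasses_swap_mul_lt {σ : Perm α} {a b : α} (h : ¬ σ.SameCycle a b) :
    numClasses (Perm.SameCycle.setoid (swap a b * σ)) <
      numClasses (Perm.SameCycle.setoid σ) := by
  have hab := sameCycle_swap_mul h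
  have hle := sameCycle_setoid_mul_le (swap a b * σ) (swap a b)
  rw [swap_mul_self_mul] at hle
  exact numClasses_lt (hle.trans (sup_le (sameCycle_setoid_swap_le_iff.2 hab) le_rfl)) h hab

lemma card_add_numClasses_le_of_isSwap {w : List (Perm α)} (hw : ∀ τ ∈ w, τ.IsSwap) :
    Nat.card α + numClasses (Perm.SameCycle.setoid w.prod) ≤
      w.length + 2 * numClasses (State.ofWord w).rel := by
  induction w with
  | nil =>
    rw [List.prod_nil, sameCycle_setoid_one, State.ofWord_nil, State.one_def, numClasses_bot,
      List.length_nil]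
    omega
  | cons τ w ih =>
    obtain ⟨⟨a, b, -, rfl⟩, hw'⟩ := List.forall_mem_cons.1 hw
    have ih := ih hw'
    rw [List.prod_cons, List.length_cons, State.ofWord_cons, State.mul_rel,
      State.ofPerm_rel]
    by_cases hab : (State.ofWord w).rel a b
    · rw [sup_eq_right.2 (sameCycle_setoid_swap_le_iff.2 hab)]
      have := numClasses_swap_mul_le w.prod a b
      omega
    · have hcycle : ¬ w.prod.SameCycle a b := fun h =>
        hab (State.sameCycle_setoid_ofWord_perm_le w (State.ofWord_perm w ▸ h))
      have := numClasses_swap_mul_lt hcycle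
      have := numClasses_le_swap_sup (State.ofWord w).rel a b
      omega

lemma two_mul_card_add_numClasses_le {w : List (Perm α)} (hw : ∀ τ ∈ w, τ.IsSwap) {A : Finset α}
    (hA : A.Nonempty) {σ : Perm α} (h : State.ofWord w = ⟨σ, blockSetoid A⟩) :
    2 * #A + numClasses (Perm.SameCycle.setoid σ) ≤ w.length + Nat.card α + 2 := by
  have heuler := card_add_numClasses_le_of_isSwap hw
  rw [← State.ofWord_perm, h] at heuler
  have := numClasses_blockSetoid_add_card_le hA
  dsimp only at heuler
  omega

lemma numClasses_le_formPerm_mul (a : α) (l : List α) (σ : Perm α) :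
    numClasses (Perm.SameCycle.setoid σ) ≤
      numClasses (Perm.SameCycle.setoid ((a :: l).formPerm * σ)) + l.length := by
  induction l generalizing a with
  | nil => rw [List.formPerm_singleton, one_mul, List.length_nil, add_zero]
  | cons b l ih =>
    rw [List.formPerm_cons_cons, mul_assoc, List.length_cons]
    have := numClasses_le_swap_mul ((b :: l).formPerm * σ) a b
    have := ih b
    omega

lemma card_le_numClasses_formPerm (a : α) (l : List α) :
    Nat.card α ≤ numClasses (Perm.SameCycle.setoid (a :: l).formPerm) + l.length := by
  simpa only [sameCycle_setoid_one, numClasses_bot, mul_one] using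
    numClasses_le_formPerm_mul a l 1

end Finite
end RiemannHurwitz

section LetterSums

open Finset MonoidAlgebra

variable {α : Type*}

/-- The sum of the states of the one-letter words with letter in `F`. The coefficient of a state in
a product of such sums counts the words with this state. -/
noncomputable def letterSum (F : Finset (Perm α)) : MonoidAlgebra ℚ (State α) :=
  ∑ τ ∈ F, single (State.ofPerm τ) 1

lemma coeff_single_mul_eq_mul_sum {M : Type*} [Monoid M] {x : MonoidAlgebra ℚ M} {s t : M}
    {T : Finset M} (c : ℚ) (hT : ∀ k ∈ x.coeff.support, s * k = t ↔ k ∈ T) :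
    (single s c * x).coeff t = c * ∑ k ∈ T, x.coeff k := by
  classical
  rw [coeff_mul, coeff_single, Finsupp.sum_single_index (by simp), Finsupp.sum, ← sum_filter,
    mul_sum]
  refine sum_subset (fun k hk => ?_) fun k hk hk' => ?_
  · obtain ⟨hk, hkt⟩ := mem_filter.1 hk
    exact (hT k hk).1 hkt
  · by_contra hne
    have hsupp : k ∈ x.coeff.support := Finsupp.mem_support_iff.2 (right_ne_zero_of_mul hne)
    exact hk' (mem_filter.2 ⟨hsupp, (hT k hsupp).2 hk⟩)

lemma exists_mul_eq_of_coeff_letterSum_mul_ne_zero {F : Finset (Perm α)}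
    {x : MonoidAlgebra ℚ (State α)} {s : State α} (hs : (letterSum F * x).coeff s ≠ 0) :
    ∃ τ ∈ F, ∃ t, State.ofPerm τ * t = s ∧ x.coeff t ≠ 0 := by
  classical
  rw [letterSum, sum_mul, coeff_sum, Finsupp.finsetSum_apply] at hs
  obtain ⟨τ, hτ, hne⟩ := exists_ne_zero_of_sum_ne_zero hs
  obtain ⟨g, hg, t, ht, rfl⟩ := mem_mul.1
    (support_coeff_mul_subset _ _ (Finsupp.mem_support_iff.2 hne))
  rw [mem_singleton.1 (Finsupp.support_single_subset hg)]
  exact ⟨τ, hτ, t, rfl, Finsupp.mem_support_iff.1 ht⟩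

lemma exists_ofWord_mul_eq_of_coeff_ne_zero {F : Finset (Perm α)} {r : ℕ}
    {x : MonoidAlgebra ℚ (State α)} {s : State α} (hs : (letterSum F ^ r * x).coeff s ≠ 0) :
    ∃ w : List (Perm α), w.length = r ∧ (∀ τ ∈ w, τ ∈ F) ∧
      ∃ t, State.ofWord w * t = s ∧ x.coeff t ≠ 0 := by
  induction r generalizing s with
  | zero => exact ⟨[], rfl, by simp, s, one_mul s, by rwa [pow_zero, one_mul] at hs⟩
  | succ r ih =>
    rw [pow_succ', mul_assoc] at hs
    obtain ⟨τ, hτ, t, rfl, ht⟩ := exists_mul_eq_of_coeff_letterSum_mul_ne_zero hs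
    obtain ⟨w, hr, hw, u, rfl, hu⟩ := ih ht
    exact ⟨τ :: w, by rw [List.length_cons, hr], List.forall_mem_cons.2 ⟨hτ, hw⟩, u,
      by rw [State.ofWord_cons, mul_assoc], hu⟩

lemma exists_ofWord_eq_of_coeff_pow_ne_zero {F : Finset (Perm α)} {r : ℕ} {s : State α}
    (hs : (letterSum F ^ r).coeff s ≠ 0) :
    ∃ w : List (Perm α), w.length = r ∧ (∀ τ ∈ w, τ ∈ F) ∧ State.ofWord w = s := by
  classical
  rw [← mul_one (letterSum F ^ r)] at hs
  obtain ⟨w, hr, hw, t, rfl, ht⟩ := exists_ofWord_mul_eq_of_coeff_ne_zero hs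
  rw [MonoidAlgebra.one_def, coeff_single, Finsupp.single_apply] at ht
  exact ⟨w, hr, hw, by rw [← (ite_ne_right_iff.1 ht).1, mul_one]⟩

lemma exists_ofWord_eq_of_coeff_ne_zero {F F' : Finset (Perm α)} {r q : ℕ} {s : State α}
    (hs : (letterSum F ^ r * letterSum F' ^ q).coeff s ≠ 0) :
    ∃ w : List (Perm α), w.length = r + q ∧ (∀ τ ∈ w, τ ∈ F ∨ τ ∈ F') ∧ State.ofWord w = s := by
  obtain ⟨w, hr, hw, t, rfl, ht⟩ := exists_ofWord_mul_eq_of_coeff_ne_zero hs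
  obtain ⟨v, hq, hv, rfl⟩ := exists_ofWord_eq_of_coeff_pow_ne_zero ht
  refine ⟨w ++ v, by rw [List.length_append, hr, hq], fun τ hτ => ?_, ?_⟩
  · exact (List.mem_append.1 hτ).imp (hw τ) (hv τ)
  · rw [State.ofWord, List.map_append, List.prod_append]
    rfl

lemma ofPerm_mul_ofPerm_eq_conj_mul (ρ τ : Perm α) :
    State.ofPerm ρ * State.ofPerm τ = State.ofPerm (ρ * τ * ρ⁻¹) * State.ofPerm ρ := by
  refine State.ext (inv_mul_cancel_right _ _).symm (le_antisymm (sup_le le_sup_right ?_)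
    (sup_le ?_ le_sup_left))
  · set E := (State.ofPerm (ρ * τ * ρ⁻¹) * State.ofPerm ρ).rel
    have hρ (x : α) : E x (ρ x) := sameCycle_setoid_le_iff.1 le_sup_right x
    have hconj (x : α) : E x ((ρ * τ * ρ⁻¹) x) := sameCycle_setoid_le_iff.1 le_sup_left x
    refine sameCycle_setoid_le_iff.2 fun x => E.trans (hρ x) (E.trans (hconj (ρ x)) ?_)
    simpa using E.symm (hρ (τ x))
  · set E := (State.ofPerm ρ * State.ofPerm τ).rel
    have hρ (x : α) : E x (ρ x) := sameCycle_setoid_le_iff.1 le_sup_left x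
    have hτ (x : α) : E x (τ x) := sameCycle_setoid_le_iff.1 le_sup_right x
    refine sameCycle_setoid_le_iff.2 fun x => ?_
    have hinv := E.symm (hρ (ρ⁻¹ x))
    rw [Perm.coe_inv, apply_symm_apply] at hinv
    exact E.trans hinv (E.trans (hτ _) (hρ _))

lemma commute_letterSum_of_conj_mem {F F' : Finset (Perm α)}
    (h : ∀ ρ ∈ F', ∀ τ ∈ F, ρ * τ * ρ⁻¹ ∈ F) : Commute (letterSum F) (letterSum F') := by
  refine Commute.sum_right _ _ _ fun ρ hρ => Eq.symm ?_
  have himage : F.map (MulAut.conj ρ).toEquiv.toEmbedding = F :=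
    eq_of_subset_of_card_le (fun _ hτ => by
      obtain ⟨τ, hτF, rfl⟩ := mem_map.1 hτ
      exact h ρ hρ τ hτF) (card_map _).ge
  rw [letterSum, mul_sum]
  conv_rhs => rw [← himage, sum_map, sum_mul]
  refine sum_congr rfl fun τ _ => ?_
  rw [single_mul_single, single_mul_single, ofPerm_mul_ofPerm_eq_conj_mul]
  rfl

open Classical in
/-- The projection onto the states whose relation is at most `E`. It is multiplicative because
these states form a submonoid whose complement is an ideal. -/
noncomputable def restrict (E : Setoid α) :
    MonoidAlgebra ℚ (State α) →ₐ[ℚ] MonoidAlgebra ℚ (State α) :=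
  lift ℚ _ (State α)
    { toFun := fun s => if s.rel ≤ E then single s 1 else 0
      map_one' := if_pos bot_le
      map_mul' := fun s t => by
        rw [ite_zero_mul_ite_zero, single_mul_single, one_mul, State.mul_rel]
        exact if_congr sup_le_iff rfl rfl }

open Classical in
lemma restrict_single (E : Setoid α) (s : State α) (c : ℚ) :
    restrict E (single s c) = if s.rel ≤ E then single s c else 0 := by
  rw [restrict, lift_single, MonoidHom.coe_mk, OneHom.coe_mk, smul_ite, smul_single, smul_eq_mul,
    mul_one, smul_zero]

lemma coeff_restrict {E : Setoid α} {s : State α} (h : s.rel ≤ E)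
    (x : MonoidAlgebra ℚ (State α)) : (restrict E x).coeff s = x.coeff s := by
  classical
  induction x using MonoidAlgebra.induction_linear with
  | zero => rw [map_zero]
  | add x y hx hy =>
    rw [map_add, coeff_add, coeff_add, Finsupp.add_apply, Finsupp.add_apply, hx, hy]
  | single t c =>
    rw [restrict_single]
    split_ifs with ht
    · rfl
    · have hts : t ≠ s := fun hts => ht (hts ▸ h)
      rw [coeff_single, Finsupp.single_eq_of_ne' hts, coeff_zero, Finsupp.zero_apply]

open Classical in
lemma restrict_letterSum (E : Setoid α) (F : Finset (Perm α)) :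
    restrict E (letterSum F) = letterSum {τ ∈ F | Perm.SameCycle.setoid τ ≤ E} := by
  rw [letterSum, map_sum, letterSum, sum_filter]
  exact sum_congr rfl fun τ _ => restrict_single E _ 1

end LetterSums

section Transpositions

open Finset MonoidAlgebra

variable {α : Type*} [DecidableEq α] [Fintype α]

open Classical in
/-- The transpositions of two points of `A`. -/
noncomputable def transpositions (A : Finset α) : Finset (Perm α) :=
  {τ | τ.IsSwap ∧ Perm.SameCycle.setoid τ ≤ blockSetoid A}

lemma mem_transpositions {A : Finset α} {τ : Perm α} :
    τ ∈ transpositions A ↔ τ.IsSwap ∧ Perm.SameCycle.setoid τ ≤ blockSetoid A := by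
  simp only [transpositions, mem_filter, mem_univ, true_and]

lemma swap_mem_transpositions {A : Finset α} {x y : α} (hxy : x ≠ y) :
    swap x y ∈ transpositions A ↔ x ∈ A ∧ y ∈ A := by
  rw [mem_transpositions, sameCycle_setoid_swap_le_iff, blockSetoid_apply, or_iff_right hxy]
  exact and_iff_right ⟨x, y, hxy, rfl⟩

/-- The transpositions of the point `a` with another point of `A`. -/
def starTranspositions (a : α) (A : Finset α) : Finset (Perm α) := (A.erase a).image (swap a)

lemma mem_starTranspositions {a : α} {A : Finset α} {τ : Perm α} :
    τ ∈ starTranspositions a A ↔ ∃ w ∈ A.erase a, swap a w = τ := mem_image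

lemma swap_mem_starTranspositions {a w : α} {A : Finset α} :
    swap a w ∈ starTranspositions a A ↔ w ∈ A.erase a :=
  (swap_injective_of_left a).mem_finset_image

lemma transpositions_eq_union {a : α} {A : Finset α} (ha : a ∈ A) :
    transpositions A = starTranspositions a A ∪ transpositions (A.erase a) := by
  ext τ
  rw [mem_union]
  refine ⟨fun hτ => ?_, ?_⟩
  · obtain ⟨x, y, hxy, rfl⟩ := (mem_transpositions.1 hτ).1
    have hA := (swap_mem_transpositions hxy).1 hτ
    rw [swap_mem_transpositions hxy]
    by_cases hx : x = a
    · subst hx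
      exact Or.inl (swap_mem_starTranspositions.2 (mem_erase.2 ⟨hxy.symm, hA.2⟩))
    by_cases hy : y = a
    · subst hy
      exact Or.inl (swap_comm y x ▸ swap_mem_starTranspositions.2 (mem_erase.2 ⟨hxy, hA.1⟩))
    exact Or.inr ⟨mem_erase.2 ⟨hx, hA.1⟩, mem_erase.2 ⟨hy, hA.2⟩⟩
  · rintro (hτ | hτ)
    · obtain ⟨w, hw, rfl⟩ := mem_starTranspositions.1 hτ
      exact (swap_mem_transpositions (ne_of_mem_erase hw).symm).2 ⟨ha, mem_of_mem_erase hw⟩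
    · exact mem_transpositions.2 ((mem_transpositions.1 hτ).imp_right fun h =>
        h.trans (blockSetoid_mono (erase_subset a A)))

lemma disjoint_starTranspositions (a : α) (A : Finset α) :
    Disjoint (starTranspositions a A) (transpositions (A.erase a)) := by
  refine disjoint_left.2 fun τ hstar hτ => ?_
  obtain ⟨w, hw, rfl⟩ := mem_starTranspositions.1 hstar
  exact notMem_erase a A ((swap_mem_transpositions (ne_of_mem_erase hw).symm).1 hτ).1

lemma letterSum_union {F F' : Finset (Perm α)} (h : Disjoint F F') :
    letterSum (F ∪ F') = letterSum F + letterSum F' := sum_union h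

lemma letterSum_transpositions {a : α} {A : Finset α} (ha : a ∈ A) :
    letterSum (transpositions A) =
      letterSum (starTranspositions a A) + letterSum (transpositions (A.erase a)) := by
  rw [transpositions_eq_union ha, letterSum_union (disjoint_starTranspositions a A)]

lemma commute_letterSum_starTranspositions (a : α) (A : Finset α) :
    Commute (letterSum (starTranspositions a A)) (letterSum (transpositions (A.erase a))) := by
  refine commute_letterSum_of_conj_mem fun ρ hρ τ hτ => ?_
  obtain ⟨w, hw, rfl⟩ := mem_starTranspositions.1 hτ
  have hle := (mem_transpositions.1 hρ).2
  rw [← swap_apply_apply, apply_eq_self_of_setoid_le hle (notMem_erase a A),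
    swap_mem_starTranspositions]
  exact apply_mem_of_setoid_le hle hw

lemma commute_letterSum_transpositions {B C : Finset α} (h : Disjoint B C) :
    Commute (letterSum (transpositions B)) (letterSum (transpositions C)) := by
  refine commute_letterSum_of_conj_mem fun ρ hρ τ hτ => ?_
  obtain ⟨x, y, hxy, rfl⟩ := (mem_transpositions.1 hτ).1
  obtain ⟨hx, hy⟩ := (swap_mem_transpositions hxy).1 hτ
  have hle := (mem_transpositions.1 hρ).2
  rwa [← swap_apply_apply, apply_eq_self_of_setoid_le hle (disjoint_left.1 h hx),
    apply_eq_self_of_setoid_le hle (disjoint_left.1 h hy)]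

open Classical in
lemma filter_starTranspositions {a : α} {A B : Finset α} (ha : a ∈ A \ B) :
    {τ ∈ starTranspositions a A |
        Perm.SameCycle.setoid τ ≤ blockSetoid (A \ B) ⊔ blockSetoid B} =
      starTranspositions a (A \ B) := by
  rw [starTranspositions, filter_image, starTranspositions]
  congr 1
  ext w
  rw [mem_filter, sameCycle_setoid_swap_le_iff, blockSetoid_sdiff_sup_apply_of_mem_sdiff ha,
    mem_erase, mem_erase, mem_sdiff]
  tauto

open Classical in
lemma filter_transpositions_erase {a : α} {A B : Finset α} (ha : a ∈ A \ B) (hB : B ⊆ A) :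
    {τ ∈ transpositions (A.erase a) |
        Perm.SameCycle.setoid τ ≤ blockSetoid (A \ B) ⊔ blockSetoid B} =
      transpositions ((A \ B).erase a) ∪ transpositions B := by
  have haB : ∀ x ∈ B, x ≠ a := fun x hx hxa => (mem_sdiff.1 ha).2 (hxa ▸ hx)
  ext τ
  by_cases hτ : τ.IsSwap
  · obtain ⟨x, y, hxy, rfl⟩ := hτ
    rw [mem_filter, mem_union, swap_mem_transpositions hxy, swap_mem_transpositions hxy,
      swap_mem_transpositions hxy, sameCycle_setoid_swap_le_iff, blockSetoid_sdiff_sup_apply]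
    grind
  · simp only [mem_filter, mem_union, mem_transpositions, hτ, false_and, or_self]

lemma disjoint_transpositions {B C : Finset α} (h : Disjoint B C) :
    Disjoint (transpositions B) (transpositions C) := by
  refine disjoint_left.2 fun τ hB hC => ?_
  obtain ⟨x, y, hxy, rfl⟩ := (mem_transpositions.1 hB).1
  exact disjoint_left.1 h ((swap_mem_transpositions hxy).1 hB).1
    ((swap_mem_transpositions hxy).1 hC).1

/-- The sum of the states of the words consisting of `r` transpositions of `a` with a point of `A`,
followed by `q` transpositions of points of `A` other than `a`. -/
noncomputable def starWordSum (a : α) (A : Finset α) (r q : ℕ) : MonoidAlgebra ℚ (State α) :=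
  letterSum (starTranspositions a A) ^ r * letterSum (transpositions (A.erase a)) ^ q

lemma letterSum_transpositions_pow {a : α} {A : Finset α} (ha : a ∈ A) (m : ℕ) :
    letterSum (transpositions A) ^ m =
      ∑ r ∈ range (m + 1), (m.choose r : ℚ) • starWordSum a A r (m - r) := by
  rw [letterSum_transpositions ha, (commute_letterSum_starTranspositions a A).add_pow]
  refine sum_congr rfl fun r _ => ?_
  rw [← nsmul_eq_mul', Nat.cast_smul_eq_nsmul, starWordSum]

lemma starWordSum_succ (a : α) (A : Finset α) (r q : ℕ) :
    starWordSum a A (r + 1) q =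
      ∑ w ∈ A.erase a, single (State.ofPerm (swap a w)) 1 * starWordSum a A r q := by
  rw [starWordSum, pow_succ', mul_assoc, ← starWordSum, letterSum, starTranspositions,
    sum_image (swap_injective_of_left a).injOn, sum_mul]

lemma exists_ofWord_eq_of_coeff_starWordSum_ne_zero {a : α} {A : Finset α} (ha : a ∈ A) {r q : ℕ}
    {s : State α} (hs : (starWordSum a A r q).coeff s ≠ 0) :
    ∃ w : List (Perm α), w.length = r + q ∧ (∀ τ ∈ w, τ ∈ transpositions A) ∧
      State.ofWord w = s := by
  obtain ⟨w, hlen, hw, rfl⟩ := exists_ofWord_eq_of_coeff_ne_zero hs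
  exact ⟨w, hlen, fun τ hτ => transpositions_eq_union ha ▸ mem_union.2 (hw τ hτ), rfl⟩

end Transpositions

section DisjointBlocks

open Finset MonoidAlgebra

variable {α : Type*}

/-- The states that a word of permutations moving only points of `A` can have: the relation is
generated inside `A` and contains the orbit relation of the product. -/
def State.SupportedOn (A : Finset α) (s : State α) : Prop :=
  Perm.SameCycle.setoid s.perm ≤ s.rel ∧ s.rel ≤ blockSetoid A

lemma State.SupportedOn.mul_inj_of_disjoint {B C : Finset α} (h : Disjoint B C)
    {s s' t t' : State α} (hs : s.SupportedOn B) (hs' : s'.SupportedOn B) (ht : t.SupportedOn C)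
    (ht' : t'.SupportedOn C) (hst : s * t = s' * t') : s = s' ∧ t = t' := by
  have hperm : s.perm * t.perm = s'.perm * t'.perm := congrArg State.perm hst
  have hrel : s.rel ⊔ t.rel = s'.rel ⊔ t'.rel := congrArg State.rel hst
  have hs_perm : s.perm = s'.perm := by
    ext x
    by_cases hx : x ∈ B
    · have hxC : x ∉ C := disjoint_left.1 h hx
      simpa only [Perm.mul_apply, apply_eq_self_of_setoid_le (ht.1.trans ht.2) hxC,
        apply_eq_self_of_setoid_le (ht'.1.trans ht'.2) hxC] using Perm.congr_fun hperm x
    · rw [apply_eq_self_of_setoid_le (hs.1.trans hs.2) hx,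
        apply_eq_self_of_setoid_le (hs'.1.trans hs'.2) hx]
  refine ⟨State.ext hs_perm ?_, State.ext (mul_left_cancel (hs_perm ▸ hperm)) ?_⟩
  · rw [← sup_inf_blockSetoid_of_disjoint h hs.2 ht.2, hrel,
      sup_inf_blockSetoid_of_disjoint h hs'.2 ht'.2]
  · rw [← sup_inf_blockSetoid_of_disjoint h.symm ht.2 hs.2, sup_comm, hrel, sup_comm,
      sup_inf_blockSetoid_of_disjoint h.symm ht'.2 hs'.2]

lemma coeff_mul_of_supportedOn {B C : Finset α} (h : Disjoint B C)
    {x y : MonoidAlgebra ℚ (State α)} (hx : ∀ s, x.coeff s ≠ 0 → s.SupportedOn B)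
    (hy : ∀ t, y.coeff t ≠ 0 → t.SupportedOn C) {s t : State α} (hs : s.SupportedOn B)
    (ht : t.SupportedOn C) : (x * y).coeff (s * t) = x.coeff s * y.coeff t :=
  coeff_mul_mul_of_uniqueMul fun _ _ hs' ht' hst =>
    State.SupportedOn.mul_inj_of_disjoint h (hx _ (Finsupp.mem_support_iff.1 hs')) hs
      (hy _ (Finsupp.mem_support_iff.1 ht')) ht hst

variable [DecidableEq α] [Fintype α]

lemma State.supportedOn_ofWord {A : Finset α} {w : List (Perm α)}
    (hw : ∀ τ ∈ w, τ ∈ transpositions A) : (State.ofWord w).SupportedOn A :=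
  ⟨State.sameCycle_setoid_ofWord_perm_le w,
    State.ofWord_rel_le_iff.2 fun τ hτ => (mem_transpositions.1 (hw τ hτ)).2⟩

lemma supportedOn_of_coeff_starWordSum_ne_zero {a : α} {A : Finset α} (ha : a ∈ A) {r q : ℕ}
    {s : State α} (hs : (starWordSum a A r q).coeff s ≠ 0) : s.SupportedOn A := by
  obtain ⟨w, -, hw, rfl⟩ := exists_ofWord_eq_of_coeff_starWordSum_ne_zero ha hs
  exact State.supportedOn_ofWord hw

lemma supportedOn_of_coeff_transpositions_pow_ne_zero {A : Finset α} {m : ℕ} {s : State α}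
    (hs : (letterSum (transpositions A) ^ m).coeff s ≠ 0) : s.SupportedOn A := by
  obtain ⟨w, -, hw, rfl⟩ := exists_ofWord_eq_of_coeff_pow_ne_zero hs
  exact State.supportedOn_ofWord hw

lemma restrict_starWordSum {a : α} {A B : Finset α} (hB : B ⊆ A) (ha : a ∈ A \ B) (r q : ℕ) :
    restrict (blockSetoid (A \ B) ⊔ blockSetoid B) (starWordSum a A r q) =
      ∑ p ∈ antidiagonal q, (q.choose p.1 : ℚ) •
        (starWordSum a (A \ B) r p.1 * letterSum (transpositions B) ^ p.2) := by
  have hdisj : Disjoint ((A \ B).erase a) B :=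
    disjoint_of_subset_left (erase_subset _ _) sdiff_disjoint
  rw [starWordSum, map_mul, map_pow, map_pow, restrict_letterSum, restrict_letterSum,
    filter_starTranspositions ha, filter_transpositions_erase ha hB,
    letterSum_union (disjoint_transpositions hdisj),
    (commute_letterSum_transpositions hdisj).add_pow', mul_sum]
  refine sum_congr rfl fun p _ => ?_
  rw [mul_smul_comm, ← mul_assoc, ← starWordSum, Nat.cast_smul_eq_nsmul]

lemma coeff_starWordSum_of_disjoint {a : α} {A B : Finset α} (hB : B ⊆ A) (ha : a ∈ A \ B)
    (r q : ℕ) {γ β : Perm α} (hγ : Perm.SameCycle.setoid γ ≤ blockSetoid (A \ B))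
    (hβ : Perm.SameCycle.setoid β ≤ blockSetoid B) :
    (starWordSum a A r q).coeff ⟨γ * β, blockSetoid (A \ B) ⊔ blockSetoid B⟩ =
      ∑ p ∈ antidiagonal q, (q.choose p.1 : ℚ) *
        ((starWordSum a (A \ B) r p.1).coeff ⟨γ, blockSetoid (A \ B)⟩ *
          (letterSum (transpositions B) ^ p.2).coeff ⟨β, blockSetoid B⟩) := by
  rw [← coeff_restrict le_rfl, restrict_starWordSum hB ha, coeff_sum, Finsupp.finsetSum_apply]
  refine sum_congr rfl fun p _ => ?_
  rw [coeff_smul, Finsupp.smul_apply, smul_eq_mul]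
  exact congrArg _ (coeff_mul_of_supportedOn sdiff_disjoint
    (fun _ => supportedOn_of_coeff_starWordSum_ne_zero ha)
    (fun _ => supportedOn_of_coeff_transpositions_pow_ne_zero)
    (s := ⟨γ, blockSetoid (A \ B)⟩) (t := ⟨β, blockSetoid B⟩) ⟨hγ, le_rfl⟩ ⟨hβ, le_rfl⟩)

end DisjointBlocks

section Peeling

open Finset MonoidAlgebra

variable {α : Type*} [DecidableEq α]

lemma swap_mul_formPerm_of_notMem {a w : α} {l : List α} (hl : (a :: l).Nodup)
    (hw : w ∉ a :: l) : swap a w * (a :: l).formPerm = (a :: (l ++ [w])).formPerm := by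
  have hrotate := List.formPerm_rotate_one (w :: a :: l) (List.nodup_cons.2 ⟨hw, hl⟩)
  rw [List.rotate_cons_succ, List.rotate_zero, List.formPerm_cons_cons] at hrotate
  rw [swap_comm, ← hrotate, List.cons_append]

lemma swap_mul_formPerm_append_cons {a w : α} {l₁ l₂ : List α}
    (h : (a :: (l₁ ++ w :: l₂)).Nodup) :
    swap a w * (a :: (l₁ ++ w :: l₂)).formPerm = (a :: l₁).formPerm * (w :: l₂).formPerm := by
  induction l₁ generalizing a with
  | nil =>
    rw [List.nil_append, List.formPerm_cons_cons, swap_mul_self_mul, List.formPerm_singleton,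
      one_mul]
  | cons b l₁ ih =>
    have hba : swap a w * swap a b = swap a b * swap b w := by
      rw [mul_swap_eq_swap_mul (swap a b), swap_apply_right, swap_apply_of_ne_of_ne] <;> grind
    rw [List.cons_append, List.formPerm_cons_cons, List.formPerm_cons_cons, mul_assoc (swap a b),
      ← ih (List.nodup_cons.1 h).2, ← mul_assoc, ← mul_assoc, hba]

lemma sameCycle_setoid_formPerm_le {l : List α} {A : Finset α} (h : ∀ x ∈ l, x ∈ A) :
    Perm.SameCycle.setoid l.formPerm ≤ blockSetoid A := by
  refine sameCycle_setoid_le_iff.2 fun x => ?_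
  by_cases hx : x ∈ l
  · exact blockSetoid_of_mem (h _ hx) (h _ (List.formPerm_apply_mem_of_mem hx))
  · exact Or.inl (List.formPerm_apply_of_notMem hx).symm

lemma setoid_head_of_formPerm {a : α} {l : List α} (hl : (a :: l).Nodup) {E : Setoid α}
    (hE : ∀ x ∈ a :: l, E x ((a :: l).formPerm x)) {x : α} (hx : x ∈ a :: l) : E a x := by
  obtain ⟨i, hi, rfl⟩ := List.getElem_of_mem hx
  induction i with
  | zero => exact E.refl _
  | succ i ih =>
    have hstep := hE _ (List.getElem_mem (Nat.lt_of_succ_lt hi))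
    rw [List.formPerm_apply_lt_getElem _ hl i hi] at hstep
    exact E.trans (ih (Nat.lt_of_succ_lt hi) (List.getElem_mem _)) hstep

lemma State.ofPerm_swap_mul_eq_iff {a w : α} {π : Perm α} {E : Setoid α} {s : State α} :
    State.ofPerm (swap a w) * s = ⟨π, E⟩ ↔
      s.perm = swap a w * π ∧ Perm.SameCycle.setoid (swap a w) ⊔ s.rel = E := by
  refine State.ext_iff.trans (and_congr_left fun _ => ?_)
  change swap a w * s.perm = π ↔ s.perm = swap a w * π
  rw [← eq_inv_mul_iff_mul_eq, swap_inv]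

lemma State.ofPerm_swap_mul_eq_blockSetoid_iff {a w : α} {A : Finset α} {π : Perm α}
    {s : State α} (hs : s.rel a w) :
    State.ofPerm (swap a w) * s = ⟨π, blockSetoid A⟩ ↔ s = ⟨swap a w * π, blockSetoid A⟩ := by
  rw [State.ofPerm_swap_mul_eq_iff, sup_eq_right.2 (sameCycle_setoid_swap_le_iff.2 hs),
    State.ext_iff]

lemma mem_Icc_of_setoid_formPerm_mul_formPerm_le {a w : α} {l₁ l₂ : List α}
    (h : (a :: (l₁ ++ w :: l₂)).Nodup) {A B : Finset α} (hA : ∀ x ∈ a :: l₁, x ∈ A)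
    (hBA : B ⊆ A.erase a) (hw : w ∈ B)
    (hle : Perm.SameCycle.setoid ((a :: l₁).formPerm * (w :: l₂).formPerm) ≤
      blockSetoid (A \ B) ⊔ blockSetoid B) :
    B ∈ Icc (w :: l₂).toFinset (A \ (a :: l₁).toFinset) := by
  obtain ⟨h₁, h₂, hdisj⟩ := (List.nodup_append' (l₁ := a :: l₁)).1 h
  have ha : a ∈ A \ B :=
    mem_sdiff.2 ⟨hA a List.mem_cons_self, fun haB => notMem_erase a A (hBA haB)⟩
  have hstep := sameCycle_setoid_le_iff.1 hle
  have hS₁ {x : α} (hx : x ∈ a :: l₁) : x ∈ A \ B := by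
    refine (blockSetoid_sdiff_sup_apply_of_mem_sdiff ha).1
      (setoid_head_of_formPerm h₁ (fun y hy => ?_) hx)
    simpa only [Perm.mul_apply, List.formPerm_apply_of_notMem (hdisj hy)] using hstep y
  have hS₂ {x : α} (hx : x ∈ w :: l₂) : x ∈ B := by
    refine (blockSetoid_sdiff_sup_apply_of_mem (A := A) hw).1
      (setoid_head_of_formPerm h₂ (fun y hy => ?_) hx)
    simpa only [Perm.mul_apply, List.formPerm_apply_of_notMem
      fun hmem => hdisj hmem (List.formPerm_apply_mem_of_mem hy)] using hstep y
  refine mem_Icc.2 ⟨fun x hx => hS₂ (List.mem_toFinset.1 hx), fun x hx => mem_sdiff.2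
    ⟨mem_of_mem_erase (hBA hx), fun hx₁ => ?_⟩⟩
  exact (mem_sdiff.1 (hS₁ (List.mem_toFinset.1 hx₁))).2 hx

variable [Fintype α]

lemma coeff_swap_mul_starWordSum_of_notMem {a w : α} {A : Finset α} (ha : a ∈ A) {l : List α}
    (hl : (a :: l).Nodup) (hw : w ∉ a :: l) (r q : ℕ) :
    (single (State.ofPerm (swap a w)) 1 * starWordSum a A r q).coeff
        ⟨(a :: l).formPerm, blockSetoid A⟩ =
      (starWordSum a A r q).coeff ⟨(a :: (l ++ [w])).formPerm, blockSetoid A⟩ := by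
  rw [← swap_mul_formPerm_of_notMem hl hw]
  have hrel {s : State α} (hs : s ∈ (starWordSum a A r q).coeff.support)
      (hperm : s.perm = swap a w * (a :: l).formPerm) : s.rel a w := by
    have hle := (supportedOn_of_coeff_starWordSum_ne_zero ha (Finsupp.mem_support_iff.1 hs)).1
    have happly := sameCycle_setoid_le_iff.1 hle w
    rw [hperm, Perm.mul_apply, List.formPerm_apply_of_notMem hw, swap_apply_right] at happly
    exact s.rel.symm happly
  rw [coeff_single_mul_eq_mul_coeff, one_mul]
  exact fun s hs =>
    ⟨fun h => (State.ofPerm_swap_mul_eq_blockSetoid_iff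
      (hrel hs (State.ofPerm_swap_mul_eq_iff.1 h).1)).1 h,
    fun h => (State.ofPerm_swap_mul_eq_blockSetoid_iff (hrel hs (congrArg State.perm h))).2 h⟩

lemma coeff_swap_mul_starWordSum_append_cons {a w : α} {A : Finset α} {l₁ l₂ : List α}
    (h : (a :: (l₁ ++ w :: l₂)).Nodup) (hA : ∀ x ∈ a :: (l₁ ++ w :: l₂), x ∈ A) {r q : ℕ}
    (hzero : (starWordSum a A r q).coeff
      ⟨(a :: l₁).formPerm * (w :: l₂).formPerm, blockSetoid A⟩ = 0) :
    (single (State.ofPerm (swap a w)) 1 * starWordSum a A r q).coeff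
        ⟨(a :: (l₁ ++ w :: l₂)).formPerm, blockSetoid A⟩ =
      ∑ B ∈ Icc (w :: l₂).toFinset (A \ (a :: l₁).toFinset), (starWordSum a A r q).coeff
        ⟨(a :: l₁).formPerm * (w :: l₂).formPerm, blockSetoid (A \ B) ⊔ blockSetoid B⟩ := by
  classical
  have ha : a ∈ A := hA a List.mem_cons_self
  have hwA : w ∈ A := hA w (by simp)
  have hw_mem {B : Finset α} (hB : B ∈ Icc (w :: l₂).toFinset (A \ (a :: l₁).toFinset)) : w ∈ B :=
    (mem_Icc.1 hB).1 (List.mem_toFinset.2 List.mem_cons_self)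
  rw [← swap_mul_formPerm_append_cons h] at hzero ⊢
  rw [coeff_single_mul_eq_mul_sum 1 (T := (Icc (w :: l₂).toFinset (A \ (a :: l₁).toFinset)).image
    fun B => ⟨swap a w * (a :: (l₁ ++ w :: l₂)).formPerm, blockSetoid (A \ B) ⊔ blockSetoid B⟩),
    one_mul, sum_image]
  · intro B hB B' hB' hBB'
    have hrel : blockSetoid (A \ B) ⊔ blockSetoid B = blockSetoid (A \ B') ⊔ blockSetoid B' :=
      congrArg State.rel hBB'
    ext x
    rw [← blockSetoid_sdiff_sup_apply_of_mem (A := A) (hw_mem hB), hrel,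
      blockSetoid_sdiff_sup_apply_of_mem (hw_mem hB')]
  · intro s hs
    have hle := (supportedOn_of_coeff_starWordSum_ne_zero ha (Finsupp.mem_support_iff.1 hs)).1
    rw [mem_image, State.ofPerm_swap_mul_eq_iff]
    constructor
    · rintro ⟨hperm, hrel⟩
      have haw : ¬ s.rel a w := fun haw => by
        rw [sup_eq_right.2 (sameCycle_setoid_swap_le_iff.2 haw)] at hrel
        have hs_eq : s = ⟨_, blockSetoid A⟩ := State.ext hperm hrel
        exact Finsupp.mem_support_iff.1 hs (hs_eq ▸ hzero)
      obtain ⟨B, hBA, hwB, hB⟩ := eq_blockSetoid_sdiff_sup_of_swap_sup_eq ha hwA haw hrel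
      rw [hperm, hB, swap_mul_formPerm_append_cons h] at hle
      exact ⟨B, mem_Icc_of_setoid_formPerm_mul_formPerm_le h
        (fun x hx => hA x (List.mem_append_left _ hx)) hBA hwB hle, State.ext hperm.symm hB.symm⟩
    · rintro ⟨B, hB, rfl⟩
      have hBA := (mem_Icc.1 hB).2
      refine ⟨rfl, swap_sup_blockSetoid_sdiff_sup (mem_sdiff.2 ⟨ha, fun haB => ?_⟩) (hw_mem hB)
        (hBA.trans sdiff_subset)⟩
      exact (mem_sdiff.1 (hBA haB)).2 (List.mem_toFinset.2 List.mem_cons_self)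

end Peeling

section HookCoefficients

open Finset
open scoped Nat

variable {α : Type*} [DecidableEq α]

lemma sum_Icc_card_sdiff {S T : Finset α} (h : S ⊆ T) (f : ℕ → ℕ → ℚ) :
    ∑ B ∈ Icc S T, f #(B \ S) #(T \ B) =
      ∑ p ∈ antidiagonal #(T \ S), (#(T \ S)).choose p.1 * f p.1 p.2 := by
  have hdisj {J : Finset α} (hJ : J ∈ (T \ S).powerset) : Disjoint S J :=
    disjoint_sdiff.mono_right (mem_powerset.1 hJ)
  rw [Icc_eq_image_powerset h, sum_image fun J hJ J' hJ' hJJ' => ?inj]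
  case inj =>
    simpa only [union_sdiff_cancel_left, hdisj hJ, hdisj hJ'] using congrArg (· \ S) hJJ'
  rw [Nat.sum_antidiagonal_eq_sum_range_succ_mk]
  simp only [← nsmul_eq_mul]
  rw [← sum_powerset_apply_card fun j => f j (#(T \ S) - j)]
  refine sum_congr rfl fun J hJ => ?_
  rw [union_sdiff_cancel_left (hdisj hJ), ← sup_eq_union, ← _root_.sdiff_sdiff_left,
    card_sdiff_of_subset (mem_powerset.1 hJ)]

lemma sum_toFinset_of_eq_append_cons {l : List α} (hl : l.Nodup) {f : α → ℚ} {g : ℕ → ℕ → ℚ}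
    (hg : ∀ j, g 0 j = 0)
    (h : ∀ l₁ w l₂, l = l₁ ++ w :: l₂ → f w = g (l₂.length + 1) l₁.length) :
    ∑ w ∈ l.toFinset, f w = ∑ p ∈ antidiagonal l.length, g p.1 p.2 := by
  induction l generalizing g with
  | nil => simp [hg]
  | cons x l ih =>
    obtain ⟨hx, hl⟩ := List.nodup_cons.1 hl
    rw [List.toFinset_cons, sum_insert (by simpa using hx), h [] x l rfl, List.length_cons,
      Nat.sum_antidiagonal_succ', ih hl (g := fun i j => g i (j + 1)) (fun j => hg _)]
    · rfl
    · rintro l₁ w l₂ rfl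
      exact h (x :: l₁) w l₂ rfl

variable [Fintype α]

lemma coeff_transpositions_pow_eq_zero {A : Finset α} (hA : A.Nonempty) {σ : Perm α} {d m : ℕ}
    (hσ : Nat.card α ≤ numClasses (Perm.SameCycle.setoid σ) + d) (hm : m + d + 2 < 2 * #A) :
    (letterSum (transpositions A) ^ m).coeff ⟨σ, blockSetoid A⟩ = 0 := by
  by_contra hne
  obtain ⟨w, hlen, hw, hword⟩ := exists_ofWord_eq_of_coeff_pow_ne_zero hne
  have := two_mul_card_add_numClasses_le (fun τ hτ => (mem_transpositions.1 (hw τ hτ)).1) hA hword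
  omega

lemma coeff_starWordSum_eq_zero {a : α} {A : Finset α} (ha : a ∈ A) {σ : Perm α} {d r q : ℕ}
    (hσ : Nat.card α ≤ numClasses (Perm.SameCycle.setoid σ) + d) (hrq : r + q + d + 2 < 2 * #A) :
    (starWordSum a A r q).coeff ⟨σ, blockSetoid A⟩ = 0 := by
  by_contra hne
  obtain ⟨w, hlen, hw, hword⟩ := exists_ofWord_eq_of_coeff_starWordSum_ne_zero ha hne
  have := two_mul_card_add_numClasses_le (fun τ hτ => (mem_transpositions.1 (hw τ hτ)).1)
    ⟨a, ha⟩ hword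
  omega

/-- The genus zero count for a cycle in `A`: the transpositions of `A` have
`(2 * N + k)! * N ! * hookNumber N (k + 1)` factorisations of a cycle of length `k + 1` into
`2 * N + k` factors that connect `A`, where `N` is the number of fixed points in `A`. -/
def HookFormula (A : Finset α) : Prop :=
  ∀ ⦃a : α⦄ ⦃l : List α⦄ ⦃N : ℕ⦄, (a :: l).Nodup → (∀ x ∈ a :: l, x ∈ A) →
    N + l.length + 1 = #A →
    (letterSum (transpositions A) ^ (2 * N + l.length)).coeff
        ⟨(a :: l).formPerm, blockSetoid A⟩ =
      (2 * N + l.length)! * N ! * hookNumber N (l.length + 1)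

/-- The refinement of `HookFormula` to factorisations whose first `r` factors move the first point
`a` of the cycle and whose other `q` factors fix it. -/
def StarFormula (r : ℕ) (A : Finset α) : Prop :=
  ∀ ⦃a : α⦄ ⦃l : List α⦄ ⦃N q : ℕ⦄, (a :: l).Nodup → (∀ x ∈ a :: l, x ∈ A) →
    N + l.length + 1 = #A → r + q = 2 * N + l.length →
    (starWordSum a A r q).coeff ⟨(a :: l).formPerm, blockSetoid A⟩ =
      q ! * N ! * starNumber r N l.length

lemma coeff_starWordSum_split {a w : α} {A B : Finset α} {l₁ l₂ : List α} {r q Nb Nc : ℕ}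
    (hT : HookFormula B) (hQ : StarFormula r (A \ B)) (hBA : B ⊆ A) (h₁ : (a :: l₁).Nodup)
    (h₂ : (w :: l₂).Nodup) (hl₁ : ∀ x ∈ a :: l₁, x ∈ A \ B) (hl₂ : ∀ x ∈ w :: l₂, x ∈ B)
    (hNb : Nb + l₂.length + 1 = #B) (hNc : Nc + l₁.length + 1 = #(A \ B))
    (hrq : r + q = 2 * Nb + l₂.length + (2 * Nc + l₁.length)) :
    (starWordSum a A r q).coeff
        ⟨(a :: l₁).formPerm * (w :: l₂).formPerm, blockSetoid (A \ B) ⊔ blockSetoid B⟩ =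
      q ! * (Nb ! * Nc !) * (hookNumber Nb (l₂.length + 1) * starNumber r Nc l₁.length) := by
  have ha : a ∈ A \ B := hl₁ a List.mem_cons_self
  have hw : w ∈ B := hl₂ w List.mem_cons_self
  rw [coeff_starWordSum_of_disjoint hBA ha r q (sameCycle_setoid_formPerm_le hl₁)
    (sameCycle_setoid_formPerm_le hl₂)]
  have hzero {p : ℕ × ℕ} (hp : p.1 + p.2 = q) (hne : p.2 ≠ 2 * Nb + l₂.length) :
      (starWordSum a (A \ B) r p.1).coeff ⟨(a :: l₁).formPerm, blockSetoid (A \ B)⟩ *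
        (letterSum (transpositions B) ^ p.2).coeff ⟨(w :: l₂).formPerm, blockSetoid B⟩ = 0 := by
    obtain hlt | hgt := hne.lt_or_gt
    · rw [coeff_transpositions_pow_eq_zero ⟨w, hw⟩ (card_le_numClasses_formPerm w l₂) (by omega),
        mul_zero]
    · rw [coeff_starWordSum_eq_zero ha (card_le_numClasses_formPerm a l₁) (by omega), zero_mul]
  obtain hq | hq := lt_or_ge q (2 * Nb + l₂.length)
  · rw [starNumber_eq_zero (by omega), mul_zero, mul_zero]
    refine sum_eq_zero fun p hp => ?_
    have hp := HasAntidiagonal.mem_antidiagonal.1 hp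
    rw [hzero hp (by omega), mul_zero]
  · obtain ⟨q', rfl⟩ := Nat.exists_eq_add_of_le' hq
    rw [sum_eq_single_of_mem (q', 2 * Nb + l₂.length) (HasAntidiagonal.mem_antidiagonal.2 rfl)
      fun p hp hne => ?_]
    · rw [hQ h₁ hl₁ hNc (by omega), hT h₂ hl₂ hNb,
        ← Nat.add_choose_mul_factorial_mul_factorial q', Nat.choose_symm_add]
      push_cast
      ring
    · have hp := HasAntidiagonal.mem_antidiagonal.1 hp
      rw [hzero hp fun h => hne (Prod.ext (by omega) h), mul_zero]

lemma coeff_starWordSum_split_of_mem_Icc {a w : α} {A B : Finset α} {l₁ l₂ : List α} {r q : ℕ}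
    (hT : ∀ B ⊂ A, HookFormula B) (hQ : ∀ C ⊆ A, StarFormula r C) (h₁ : (a :: l₁).Nodup)
    (h₂ : (w :: l₂).Nodup) (hA : ∀ x ∈ a :: l₁, x ∈ A)
    (hB : B ∈ Icc (w :: l₂).toFinset (A \ (a :: l₁).toFinset))
    (hrq : r + q + l₁.length + l₂.length + 4 = 2 * #A) :
    (starWordSum a A r q).coeff
        ⟨(a :: l₁).formPerm * (w :: l₂).formPerm, blockSetoid (A \ B) ⊔ blockSetoid B⟩ =
      q ! * ((#(B \ (w :: l₂).toFinset))! * (#((A \ (a :: l₁).toFinset) \ B))!) *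
        (hookNumber #(B \ (w :: l₂).toFinset) (l₂.length + 1) *
          starNumber r #((A \ (a :: l₁).toFinset) \ B) l₁.length) := by
  obtain ⟨hwB, hBA⟩ := mem_Icc.1 hB
  have hBA' : B ⊆ A := hBA.trans sdiff_subset
  have hdisj {x : α} (hx : x ∈ a :: l₁) (hxB : x ∈ B) : False :=
    (mem_sdiff.1 (hBA hxB)).2 (List.mem_toFinset.2 hx)
  have ha : a ∈ a :: l₁ := List.mem_cons_self
  have hcard₁ : #(a :: l₁).toFinset = l₁.length + 1 := List.toFinset_card_of_nodup h₁
  have hcard₂ : #(w :: l₂).toFinset = l₂.length + 1 := List.toFinset_card_of_nodup h₂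
  have hcardA := card_sdiff_add_card_eq_card
    (show (a :: l₁).toFinset ⊆ A from fun x hx => hA x (List.mem_toFinset.1 hx))
  have hcardB := card_sdiff_add_card_eq_card hwB
  have hcardBA := card_sdiff_add_card_eq_card hBA
  have hcardBA' := card_sdiff_add_card_eq_card hBA'
  exact coeff_starWordSum_split (hT B ⟨hBA', fun hAB => hdisj ha (hAB (hA a ha))⟩)
    (hQ _ sdiff_subset) hBA' h₁ h₂ (fun x hx => mem_sdiff.2 ⟨hA x hx, hdisj hx⟩)
    (fun x hx => hwB (List.mem_toFinset.2 hx)) (by omega) (by omega) (by omega)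

lemma coeff_swap_mul_starWordSum_of_mem {a w : α} {A : Finset α} {l₁ l₂ : List α} {r q N : ℕ}
    (hT : ∀ B ⊂ A, HookFormula B) (hQ : ∀ C ⊆ A, StarFormula r C)
    (h : (a :: (l₁ ++ w :: l₂)).Nodup) (hA : ∀ x ∈ a :: (l₁ ++ w :: l₂), x ∈ A)
    (hN : N + (l₁ ++ w :: l₂).length + 1 = #A)
    (hrq : r + 1 + q = 2 * N + (l₁ ++ w :: l₂).length) :
    (MonoidAlgebra.single (State.ofPerm (swap a w)) 1 * starWordSum a A r q).coeff
        ⟨(a :: (l₁ ++ w :: l₂)).formPerm, blockSetoid A⟩ =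
      q ! * N ! * ∑ p ∈ antidiagonal N,
        hookNumber p.1 (l₂.length + 1) * starNumber r p.2 l₁.length := by
  rw [List.length_append, List.length_cons] at hN hrq
  obtain ⟨h₁, h₂, hdisj⟩ := (List.nodup_append' (l₁ := a :: l₁)).1 h
  have hA₁ : ∀ x ∈ a :: l₁, x ∈ A := fun x hx => hA x (List.mem_append_left _ hx)
  have hsub : (w :: l₂).toFinset ⊆ A \ (a :: l₁).toFinset := fun x hx => mem_sdiff.2
    ⟨hA x (List.mem_append_right (a :: l₁) (List.mem_toFinset.1 hx)),
      fun hx₁ => hdisj (List.mem_toFinset.1 hx₁) (List.mem_toFinset.1 hx)⟩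
  have hfree : #((A \ (a :: l₁).toFinset) \ (w :: l₂).toFinset) = N := by
    rw [card_sdiff_of_subset hsub, card_sdiff_of_subset fun x hx => hA₁ x (List.mem_toFinset.1 hx),
      List.toFinset_card_of_nodup h₁, List.toFinset_card_of_nodup h₂, List.length_cons,
      List.length_cons]
    omega
  have hclasses : Nat.card α ≤ numClasses (Perm.SameCycle.setoid
      ((a :: l₁).formPerm * (w :: l₂).formPerm)) + (l₁.length + l₂.length) := by
    have := card_le_numClasses_formPerm w l₂
    have := numClasses_le_formPerm_mul a l₁ (w :: l₂).formPerm
    omega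
  rw [coeff_swap_mul_starWordSum_append_cons h hA
    (coeff_starWordSum_eq_zero (hA a List.mem_cons_self) hclasses (by omega)),
    sum_congr rfl fun B hB =>
      coeff_starWordSum_split_of_mem_Icc (r := r) (q := q) hT hQ h₁ h₂ hA₁ hB (by omega)]
  refine (sum_Icc_card_sdiff hsub fun i j => q ! * (i ! * j !) *
    (hookNumber i (l₂.length + 1) * starNumber r j l₁.length)).trans ?_
  rw [hfree, mul_sum]
  refine sum_congr rfl fun p hp => ?_
  rw [← HasAntidiagonal.mem_antidiagonal.1 hp, ← Nat.add_choose_mul_factorial_mul_factorial,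
    Nat.choose_symm_add]
  push_cast
  ring

lemma coeff_swap_mul_starWordSum_join {a w : α} {A : Finset α} {l : List α} {r q N : ℕ}
    (hQ : StarFormula r A) (hl : (a :: l).Nodup) (hw : w ∉ a :: l) (hA : ∀ x ∈ a :: l, x ∈ A)
    (hwA : w ∈ A) (hN : N + l.length + 2 = #A) (hrq : r + q = 2 * N + l.length + 1) :
    (MonoidAlgebra.single (State.ofPerm (swap a w)) 1 * starWordSum a A r q).coeff
        ⟨(a :: l).formPerm, blockSetoid A⟩ =
      q ! * N ! * starNumber r N (l.length + 1) := by
  have hlen : (l ++ [w]).length = l.length + 1 := List.length_append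
  rw [coeff_swap_mul_starWordSum_of_notMem (hA a List.mem_cons_self) hl hw, ← hlen]
  refine hQ (List.nodup_append_comm (l₁ := [w]).1 (List.nodup_cons.2 ⟨hw, hl⟩)) (fun x hx => ?_)
    (by omega) (by omega)
  obtain hx | hx := List.mem_append.1 (show x ∈ (a :: l) ++ [w] from hx)
  · exact hA x hx
  · exact List.mem_singleton.1 hx ▸ hwA

lemma starFormula_zero (A : Finset α) : StarFormula 0 A := by
  intro a l N q hl hA hN hq
  rw [zero_add] at hq
  rw [starWordSum, pow_zero, one_mul, starNumber_zero]
  have ha : a ∈ A := hA a List.mem_cons_self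
  by_cases hcard : #A = 1
  · obtain ⟨rfl, hl⟩ : N = 0 ∧ l.length = 0 := by omega
    obtain rfl := List.length_eq_zero_iff.1 hl
    obtain rfl : A = {a} := (eq_of_subset_of_card_le (singleton_subset_iff.2 ha) hcard.le).symm
    have hone : (⟨[a].formPerm, blockSetoid {a}⟩ : State α) = 1 :=
      State.ext (List.formPerm_singleton a) (le_bot_iff.1 (blockSetoid_le_iff.2
        fun x hx y hy => (mem_singleton.1 hx).trans (mem_singleton.1 hy).symm))
    obtain rfl : q = 0 := hq
    rw [hone]
    simp [MonoidAlgebra.one_def]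
  · rw [if_neg (by omega), mul_zero]
    by_contra hne
    have hle : blockSetoid A ≤ blockSetoid (A.erase a) :=
      (supportedOn_of_coeff_transpositions_pow_ne_zero hne).2
    obtain ⟨b, hb, hba⟩ := exists_mem_ne (by omega : 1 < #A) a
    obtain hab | ⟨ha', -⟩ := blockSetoid_le_iff.1 hle a ha b hb
    · exact hba hab.symm
    · exact notMem_erase a A ha'

lemma starFormula_succ {r : ℕ} {A : Finset α} (hT : ∀ B ⊂ A, HookFormula B)
    (hQ : ∀ C ⊆ A, StarFormula r C) : StarFormula (r + 1) A := by
  intro a l N q hl hA hN hrq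
  obtain ⟨hal, hl'⟩ := List.nodup_cons.1 hl
  have ha : a ∈ A := hA a List.mem_cons_self
  set f : α → ℚ := fun w => (MonoidAlgebra.single (State.ofPerm (swap a w)) 1 *
    starWordSum a A r q).coeff ⟨(a :: l).formPerm, blockSetoid A⟩
  have hsub : l.toFinset ⊆ A.erase a := fun x hx => mem_erase.2
    ⟨fun hxa => hal (hxa ▸ List.mem_toFinset.1 hx), hA x (by simp [List.mem_toFinset.1 hx])⟩
  have hcut : ∑ w ∈ l.toFinset, f w = ∑ p ∈ antidiagonal l.length,
      q ! * N ! * ∑ s ∈ antidiagonal N, hookNumber s.1 p.1 * starNumber r s.2 p.2 := by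
    refine sum_toFinset_of_eq_append_cons hl' (g := fun i j => q ! * N ! *
      ∑ s ∈ antidiagonal N, hookNumber s.1 i * starNumber r s.2 j) (fun j => ?_) ?_
    · simp [hookNumber_zero_right]
    · rintro l₁ w l₂ rfl
      exact coeff_swap_mul_starWordSum_of_mem hT hQ hl hA hN hrq
  have hjoin : ∑ w ∈ A.erase a \ l.toFinset, f w =
      q ! * N ! * if N = 0 then 0 else starNumber r (N - 1) (l.length + 1) := by
    have hcard : #(A.erase a \ l.toFinset) = N := by
      rw [card_sdiff_of_subset hsub, card_erase_of_mem ha, List.toFinset_card_of_nodup hl']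
      omega
    cases N with
    | zero => rw [card_eq_zero.1 hcard, sum_empty, if_pos rfl, mul_zero]
    | succ N =>
      have hterm : ∀ w ∈ A.erase a \ l.toFinset,
          f w = q ! * N ! * starNumber r N (l.length + 1) := fun w hw => by
        obtain ⟨hwA, hwl⟩ := mem_sdiff.1 hw
        obtain ⟨hwa, hwA⟩ := mem_erase.1 hwA
        exact coeff_swap_mul_starWordSum_join (hQ A Subset.rfl) hl
          (by simpa [hwa] using hwl) hA hwA (by omega) (by omega)
      rw [sum_congr rfl hterm, sum_const, hcard, if_neg N.succ_ne_zero, Nat.add_sub_cancel,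
        Nat.factorial_succ, nsmul_eq_mul]
      push_cast
      ring
  rw [starWordSum_succ, MonoidAlgebra.coeff_sum, Finsupp.finsetSum_apply, starNumber_succ, mul_add,
    mul_sum, ← hcut, ← hjoin, sum_sdiff hsub]

lemma starFormula_of_forall_ssubset {A : Finset α} (hT : ∀ B ⊂ A, HookFormula B) (r : ℕ) :
    StarFormula r A := by
  induction r generalizing A with
  | zero => exact starFormula_zero A
  | succ r ih =>
    exact starFormula_succ hT fun C hC => ih fun B hB => hT B (hB.trans_subset hC)

theorem hookFormula (A : Finset α) : HookFormula A := by
  induction A using Finset.strongInduction with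
  | H A ih =>
  intro a l N hl hA hN
  rw [letterSum_transpositions_pow (hA a List.mem_cons_self), MonoidAlgebra.coeff_sum,
    Finsupp.finsetSum_apply, ← sum_starNumber_div_factorial, mul_sum]
  refine sum_congr rfl fun r hr => ?_
  have hr := mem_range_succ_iff.1 hr
  rw [MonoidAlgebra.coeff_smul, Finsupp.smul_apply, smul_eq_mul,
    starFormula_of_forall_ssubset ih r hl hA hN (by omega), Nat.cast_choose ℚ hr]
  field_simp

end HookCoefficients

section Counting

open Finset MonoidAlgebra
open scoped Nat

lemma sum_single_pow {M ι : Type*} [Monoid M] [Fintype ι] (g : ι → M) (m : ℕ) :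
    (∑ x : ι, single (g x) (1 : ℚ)) ^ m =
      ∑ τ : Fin m → ι, single (List.ofFn fun i => g (τ i)).prod (1 : ℚ) := by
  induction m with
  | zero => simp [MonoidAlgebra.one_def]
  | succ m ih =>
    rw [pow_succ', ih, sum_mul_sum, ← sum_product', univ_product_univ,
      ← (Fin.consEquiv fun _ => ι).sum_comp]
    refine sum_congr rfl fun p _ => ?_
    rw [single_mul_single, one_mul, List.ofFn_succ, List.prod_cons]
    rfl

lemma coeff_sum_single_pow {M ι : Type*} [Monoid M] [Fintype ι] (g : ι → M) (m : ℕ) (s : M) :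
    ((∑ x : ι, single (g x) (1 : ℚ)) ^ m).coeff s =
      Nat.card {τ : Fin m → ι // (List.ofFn fun i => g (τ i)).prod = s} := by
  classical
  rw [sum_single_pow, coeff_sum, Finsupp.finsetSum_apply, Nat.card_eq_fintype_card,
    Fintype.card_subtype]
  simp only [coeff_single, Finsupp.single_apply]
  rw [sum_boole]

lemma coeff_letterSum_pow {α : Type*} [Finite α] (F : Finset (Perm α)) (m : ℕ) (s : State α) :
    (letterSum F ^ m).coeff s =
      Nat.card {τ : Fin m → Perm α // (∀ i, τ i ∈ F) ∧ State.ofWord (List.ofFn τ) = s} := by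
  have hofWord (τ : Fin m → Perm α) :
      State.ofWord (List.ofFn τ) = (List.ofFn fun i => State.ofPerm (τ i)).prod := by
    rw [State.ofWord, List.map_ofFn]
    rfl
  rw [letterSum, ← sum_coe_sort, coeff_sum_single_pow]
  refine congrArg Nat.cast (Nat.card_congr
    { toFun := fun τ => ⟨fun i => τ.1 i, fun i => (τ.1 i).2, (hofWord _).trans τ.2⟩
      invFun := fun τ => ⟨fun i => ⟨τ.1 i, τ.2.1 i⟩, (hofWord _).symm.trans τ.2.2⟩
      left_inv := fun _ => rfl
      right_inv := fun _ => rfl })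

variable {α : Type*}

lemma State.ofWord_rel_eq_orbitRel (w : List (Perm α)) :
    (State.ofWord w).rel = MulAction.orbitRel (Subgroup.closure {τ | τ ∈ w}) α := by
  refine le_antisymm (State.ofWord_rel_le_iff.2 fun τ hτ => sameCycle_setoid_le_iff.2 fun x =>
    Setoid.symm' _ ⟨⟨τ, Subgroup.subset_closure hτ⟩, rfl⟩) ?_
  rintro _ y ⟨⟨g, hg⟩, rfl⟩
  refine Setoid.symm' _ (show (State.ofWord w).rel y (g y) from ?_)
  induction hg using Subgroup.closure_induction generalizing y with
  | mem τ hτ => exact sameCycle_setoid_le_iff.1 (State.ofWord_rel_le_iff.1 le_rfl τ hτ) y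
  | one => exact Setoid.refl' _ y
  | mul g h _ _ ihg ihh => exact Setoid.trans' _ (ihh (y := y)) (ihg (y := h y))
  | inv g _ ih =>
    have h := Setoid.symm' _ (ih (y := g⁻¹ y))
    rwa [← Perm.mul_apply, mul_inv_cancel, Perm.one_apply] at h

lemma State.ofWord_ofFn_rel_eq_blockSetoid_univ_iff [Fintype α] {m : ℕ} (τ : Fin m → Perm α) :
    (State.ofWord (List.ofFn τ)).rel = blockSetoid univ ↔
      ∀ x y, ∃ g ∈ Subgroup.closure (Set.range τ), g x = y := by
  have hrange : {σ | σ ∈ List.ofFn τ} = Set.range τ := Set.ext fun _ => List.mem_ofFn' τ _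
  rw [State.ofWord_rel_eq_orbitRel, hrange]
  refine ⟨fun h x y => ?_, fun h => ?_⟩
  · obtain ⟨⟨g, hg⟩, hgx⟩ := h ▸ blockSetoid_of_mem (mem_univ y) (mem_univ x)
    exact ⟨g, hg, hgx⟩
  · refine Setoid.ext fun x y => iff_of_true ?_ (blockSetoid_of_mem (mem_univ x) (mem_univ y))
    obtain ⟨g, hg, hgy⟩ := h y x
    exact ⟨⟨g, hg⟩, hgy⟩

lemma natCard_transitive_factorization [Fintype α] [DecidableEq α] (σ : Perm α) (m : ℕ) :
    (Nat.card {τ : Fin m → Perm α // (∀ i, (τ i).IsSwap) ∧ (List.ofFn τ).prod = σ ∧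
        ∀ x y, ∃ g ∈ Subgroup.closure (Set.range τ), g x = y} : ℚ) =
      (letterSum (transpositions univ) ^ m).coeff ⟨σ, blockSetoid univ⟩ := by
  rw [coeff_letterSum_pow]
  refine congrArg Nat.cast (Nat.card_congr (Equiv.subtypeEquivRight fun τ => ?_))
  rw [State.ext_iff, State.ofWord_perm, State.ofWord_ofFn_rel_eq_blockSetoid_univ_iff]
  refine and_congr_left fun _ => forall_congr' fun i => ?_
  rw [mem_transpositions, and_iff_left]
  exact fun x y _ => blockSetoid_of_mem (mem_univ x) (mem_univ y)

lemma factorial_mul_hookNumber_one (N : ℕ) :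
    N ! * hookNumber N 1 = ((N + 1 : ℕ) : ℚ) ^ (((N + 1 : ℕ) : ℤ) - 3) := by
  have hN : ((N + 1 : ℕ) : ℚ) ≠ 0 := Nat.cast_ne_zero.2 N.succ_ne_zero
  rw [show ((N + 1 : ℕ) : ℤ) - 3 = (N : ℤ) - (2 : ℕ) by push_cast; ring, zpow_sub₀ hN,
    zpow_natCast, zpow_natCast, hookNumber]
  push_cast
  field_simp
  simp

end Counting

end Hurwitz

/-- The number of (2n-2)-tuples of transpositions of {1,...,n} whose product is the
identity and which generate a transitive subgroup equals n^(n-3) * (2n-2)!. -/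
theorem hurwitz_number_simple (n : ℕ) (hn : 2 ≤ n) :
    (Nat.card {τ : Fin (2 * n - 2) → Perm (Fin n) //
        (∀ i, (τ i).IsSwap) ∧
        (List.ofFn τ).prod = 1 ∧
        (∀ x y : Fin n, ∃ g ∈ Subgroup.closure (Set.range τ), g x = y)} : ℚ) =
      (n : ℚ) ^ ((n : ℤ) - 3) * ((2 * n - 2).factorial : ℚ) := by
  obtain ⟨N, rfl⟩ : ∃ N, n = N + 1 := ⟨n - 1, by omega⟩
  have hcount := Hurwitz.hookFormula (Finset.univ : Finset (Fin (N + 1))) (a := 0) (l := [])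
    (List.nodup_singleton 0) (fun x _ => Finset.mem_univ x) (Finset.card_fin (N + 1)).symm
  rw [List.formPerm_singleton, List.length_nil, Nat.add_zero (2 * N), Nat.zero_add, mul_assoc,
    Hurwitz.factorial_mul_hookNumber_one] at hcount
  rw [show 2 * (N + 1) - 2 = 2 * N by omega, Hurwitz.natCard_transitive_factorization, hcount,
    mul_comm]
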